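/- arXiv:1308.3181 — 3 statements merged into one kernel-verified Lean document; each statement's English description precedes it below -/
import Mathlib

section
/- Let (S,d) be a Busemann surface and let x, y ∈ S be distinct points. Then the cone C(x,y) = {z ∈ S : x ∈ [y,z]} is a convex and closed subset of S. -/
open Metric Set MeasureTheory

/-- `γ` is a geodesic on the interval `[a, b]`. -/
def IsGeodesicOn {S : Type*} [MetricSpace S] (γ : ℝ → S) (a b : ℝ) : Prop :=
  ∀ s ∈ Set.Icc a b, ∀ t ∈ Set.Icc a b, dist (γ s) (γ t) = |s - t|

/-- `γ` is a geodesic from `x` to `y`. -/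
def IsGeodesicFromTo {S : Type*} [MetricSpace S] (γ : ℝ → S) (x y : S) : Prop :=
  IsGeodesicOn γ 0 (dist x y) ∧ γ 0 = x ∧ γ (dist x y) = y

/-- A geodesic metric space: every pair of points is joined by a geodesic. -/
def IsGeodesicMetricSpace (S : Type*) [MetricSpace S] : Prop :=
  ∀ x y : S, ∃ γ : ℝ → S, IsGeodesicFromTo γ x y

/-- A Busemann space: a geodesic metric space in which the distance function between
any two geodesics is convex. -/
def IsBusemannSpace (S : Type*) [MetricSpace S] : Prop :=
  IsGeodesicMetricSpace S ∧
    ∀ (γ γ' : ℝ → S) (a b a' b' : ℝ), a ≤ b → a' ≤ b' →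
      IsGeodesicOn γ a b → IsGeodesicOn γ' a' b' →
      ConvexOn ℝ (Set.Icc (0 : ℝ) 1)
        (fun t => dist (γ ((1 - t) * a + t * b)) (γ' ((1 - t) * a' + t * b')))

/-- A Busemann surface: a Busemann space homeomorphic to the plane `ℝ²`. -/
def IsBusemannSurface (S : Type*) [MetricSpace S] : Prop :=
  IsBusemannSpace S ∧ Nonempty (S ≃ₜ (ℝ × ℝ))

/-- `G` is the image of a geodesic from `x` to `y`. -/
def IsGeodesicSegment {S : Type*} [MetricSpace S] (x y : S) (G : Set S) : Prop :=
  ∃ γ : ℝ → S, IsGeodesicFromTo γ x y ∧ G = γ '' Set.Icc 0 (dist x y)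

/-- Convexity of a set with respect to a geodesic-segment assignment `seg`. -/
def SegConvex {S : Type*} (seg : S → S → Set S) (R : Set S) : Prop :=
  ∀ p ∈ R, ∀ q ∈ R, seg p q ⊆ R

/-- The convex hull: the smallest `seg`-convex set containing `Q`. -/
def segConvexHull {S : Type*} (seg : S → S → Set S) (Q : Set S) : Set S :=
  ⋂₀ {R : Set S | SegConvex seg R ∧ Q ⊆ R}

/-- A line of `S`: the image of an isometric embedding of `ℝ` into `S`. -/
def IsLineSet {S : Type*} [MetricSpace S] (L : Set S) : Prop :=
  ∃ ℓ : ℝ → S, Isometry ℓ ∧ L = Set.range ℓ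

/-- An open halfplane determined by a line `L`: a connected component of `S \ L`. -/
def IsOpenHalfplane {S : Type*} [MetricSpace S] (L H : Set S) : Prop :=
  ∃ x, x ∉ L ∧ H = connectedComponentIn Lᶜ x

/-- A closed halfplane determined by a line `L`: an open halfplane together with `L`. -/
def IsClosedHalfplane {S : Type*} [MetricSpace S] (L H : Set S) : Prop :=
  ∃ H', IsOpenHalfplane L H' ∧ H = H' ∪ L

/-- `X` and `Y` are line-separable: they lie in different open halfplanes of some line. -/
def LineSeparable {S : Type*} [MetricSpace S] (X Y : Set S) : Prop :=
  ∃ L H₁ H₂ : Set S, IsLineSet L ∧ IsOpenHalfplane L H₁ ∧ IsOpenHalfplane L H₂ ∧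
    H₁ ≠ H₂ ∧ X ⊆ H₁ ∧ Y ⊆ H₂

/-- `X` and `Y` are weakly line-separable: they lie in different closed halfplanes of
some line. -/
def WeaklyLineSeparable {S : Type*} [MetricSpace S] (X Y : Set S) : Prop :=
  ∃ L H₁ H₂ : Set S, IsLineSet L ∧ IsClosedHalfplane L H₁ ∧ IsClosedHalfplane L H₂ ∧
    H₁ ≠ H₂ ∧ X ⊆ H₁ ∧ Y ⊆ H₂

/-- `Q` is in general position: no three distinct points of `Q` lie on a common line. -/
def InGeneralPosition {S : Type*} [MetricSpace S] (Q : Set S) : Prop :=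
  ∀ x ∈ Q, ∀ y ∈ Q, ∀ z ∈ Q, x ≠ y → y ≠ z → x ≠ z →
    ∀ L : Set S, IsLineSet L → ¬(x ∈ L ∧ y ∈ L ∧ z ∈ L)

/-- `L` is a tangent line of the set `K`. -/
def IsTangentLine {S : Type*} [MetricSpace S] (L K : Set S) : Prop :=
  IsLineSet L ∧ (K ∩ L).Nonempty ∧ ∃ H, IsClosedHalfplane L H ∧ K ⊆ H

/-- `L` is an inner bitangent of `K'` and `K''`. -/
def IsInnerBitangent {S : Type*} [MetricSpace S] (L K' K'' : Set S) : Prop :=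
  IsTangentLine L K' ∧ IsTangentLine L K'' ∧
    ∃ H₁ H₂, IsClosedHalfplane L H₁ ∧ IsClosedHalfplane L H₂ ∧ H₁ ≠ H₂ ∧
      K' ⊆ H₁ ∧ K'' ⊆ H₂

noncomputable section

namespace BusCone

/-! ### Continuous logarithms -/

theorem exists_log {A : Type*} [TopologicalSpace A] [SimplyConnectedSpace A]
    [LocallyPathConnectedSpace A] (a₀ : A) (f : A → ℂ) (hf : Continuous f) (h0 : ∀ a, f a ≠ 0) :
    ∃ L : A → ℂ, Continuous L ∧ ∀ a, Complex.exp (L a) = f a := by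
  rcases Complex.isCoveringMapOn_exp.existsUnique_continuousMap_lifts (⟨f, hf⟩ : C(A, ℂ))
    (a₀ := a₀) (Complex.exp_log (h0 a₀)) (fun a => h0 a) with ⟨L, ⟨-, hL⟩, -⟩
  exact ⟨L, L.continuous, fun a => congrFun hL a⟩

theorem log_unique (L M : ℝ → ℂ) (hL : Continuous L) (hM : Continuous M)
    (h : ∀ s, Complex.exp (L s) = Complex.exp (M s)) : L 1 - L 0 = M 1 - M 0 := by
  obtain ⟨F, -, hF⟩ := Complex.isCoveringMapOn_exp.existsUnique_continuousMap_lifts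
    (⟨fun s => Complex.exp (L s), Complex.continuous_exp.comp hL⟩ : C(ℝ, ℂ))
    (a₀ := (0 : ℝ)) (e₀ := L 0) rfl (fun a => Complex.exp_ne_zero _)
  have h1 := hF ⟨L, hL⟩ ⟨rfl, rfl⟩
  have h2 := hF ⟨fun s => M s + (L 0 - M 0), hM.add continuous_const⟩ ⟨by simp, by
    ext s
    have := h 0
    simp [Complex.exp_add, Complex.exp_sub, this, h s]⟩
  have h3 := congrArg (fun F : C(ℝ, ℂ) => F 1) (h1.trans h2.symm)
  simp only [ContinuousMap.coe_mk] at h3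
  rw [h3]; ring

open Classical in
/-- variation of the logarithm along a path -/
def dl (f : ℝ → ℂ) : ℂ :=
  if h : ∃ L : ℝ → ℂ, Continuous L ∧ ∀ s, Complex.exp (L s) = f s then
    h.choose 1 - h.choose 0 else 0

theorem dl_eq (f L : ℝ → ℂ) (hL : Continuous L) (h : ∀ s, Complex.exp (L s) = f s) :
    dl f = L 1 - L 0 := by
  have hex : ∃ L : ℝ → ℂ, Continuous L ∧ ∀ s, Complex.exp (L s) = f s := ⟨L, hL, h⟩
  rw [dl, dif_pos hex]
  exact log_unique _ _ hex.choose_spec.1 hL (fun s => by rw [hex.choose_spec.2, h])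

theorem dl_exp (f : ℝ → ℂ) (hf : Continuous f) (h0 : ∀ s, f s ≠ 0) :
    Complex.exp (dl f) = f 1 / f 0 := by
  obtain ⟨L, hL, h⟩ := exists_log 0 f hf h0
  rw [dl_eq f L hL h, Complex.exp_sub, h, h]

theorem dl_neg (f : ℝ → ℂ) (hf : Continuous f) (h0 : ∀ s, f s ≠ 0) :
    dl (fun s => - f s) = dl f := by
  obtain ⟨L, hL, h⟩ := exists_log 0 f hf h0
  rw [dl_eq f L hL h, dl_eq (fun s => - f s) (fun s => L s + Real.pi * Complex.I)
    (hL.add continuous_const) (fun s => by simp [Complex.exp_add, h])]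
  ring

theorem dl_rev (f : ℝ → ℂ) (hf : Continuous f) (h0 : ∀ s, f s ≠ 0) :
    dl (fun s => f (1 - s)) = - dl f := by
  obtain ⟨L, hL, h⟩ := exists_log 0 f hf h0
  rw [dl_eq f L hL h, dl_eq (fun s => f (1 - s)) (fun s => L (1 - s))
    (by fun_prop) (fun s => by simp [h])]
  simp

theorem dl_const (c : ℂ) (h0 : c ≠ 0) : dl (fun _ => c) = 0 := by
  rw [dl_eq (fun _ => c) (fun _ => Complex.log c) continuous_const
    (fun s => Complex.exp_log h0)]
  simp

theorem dl_square (F : ℝ → ℝ → ℂ) (hF : Continuous (fun p : ℝ × ℝ => F p.1 p.2))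
    (h0 : ∀ s t, F s t ≠ 0) :
    dl (fun s => F s 0) + dl (fun t => F 1 t) = dl (fun t => F 0 t) + dl (fun s => F s 1) := by
  obtain ⟨L, hL, h⟩ := exists_log (0 : ℝ × ℝ) (fun p : ℝ × ℝ => F p.1 p.2) hF
    (fun p => h0 _ _)
  rw [dl_eq (fun s => F s 0) (fun s => L (s, 0)) (by fun_prop) (fun s => h (s, 0)),
    dl_eq (fun s => F s 1) (fun s => L (s, 1)) (by fun_prop) (fun s => h (s, 1)),
    dl_eq (fun s => F 0 s) (fun s => L (0, s)) (by fun_prop) (fun s => h (0, s)),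
    dl_eq (fun s => F 1 s) (fun s => L (1, s)) (by fun_prop) (fun s => h (1, s))]
  ring

/-! ### Geodesics -/

variable {S : Type*} [MetricSpace S]

/-- betweenness -/
def B (p q r : S) : Prop := dist p q + dist q r = dist p r

theorem conv_bound (hS : IsBusemannSpace S) {γ γ' : ℝ → S} {p q p' q' : S}
    (h : IsGeodesicFromTo γ p q) (h' : IsGeodesicFromTo γ' p' q') {t : ℝ}
    (ht : t ∈ Icc (0 : ℝ) 1) :
    dist (γ (t * dist p q)) (γ' (t * dist p' q')) ≤ (1 - t) * dist p p' + t * dist q q' := by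
  have hc := hS.2 γ γ' 0 (dist p q) 0 (dist p' q') dist_nonneg dist_nonneg h.1 h'.1
  have := hc.2 (show (0 : ℝ) ∈ Icc (0 : ℝ) 1 by simp) (show (1 : ℝ) ∈ Icc (0 : ℝ) 1 by simp)
    (show 0 ≤ 1 - t by linarith [ht.2]) ht.1 (by ring)
  simpa [h.2.1, h.2.2, h'.2.1, h'.2.2] using this

theorem geod_unique (hS : IsBusemannSpace S) {γ γ' : ℝ → S} {p q : S}
    (h : IsGeodesicFromTo γ p q) (h' : IsGeodesicFromTo γ' p q) {t : ℝ}
    (ht : t ∈ Icc (0 : ℝ) (dist p q)) : γ t = γ' t := by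
  rcases (dist_nonneg (x := p) (y := q)).eq_or_lt with hd | hd
  · have : t = 0 := le_antisymm (by rw [hd]; exact ht.2) ht.1
    rw [this, h.2.1, h'.2.1]
  · have := conv_bound hS h h' (t := t / dist p q)
      ⟨div_nonneg ht.1 hd.le, (div_le_one hd).2 ht.2⟩
    rw [div_mul_cancel₀ _ hd.ne'] at this
    simpa using this

theorem geod_concat {γ γ' : ℝ → S} {p m q : S}
    (h : IsGeodesicFromTo γ p m) (h' : IsGeodesicFromTo γ' m q) (hb : B p m q) :
    IsGeodesicFromTo (fun s => if s ≤ dist p m then γ s else γ' (s - dist p m)) p q := by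
  unfold B at hb
  have hpm := dist_nonneg (x := p) (y := m)
  have hmq := dist_nonneg (x := m) (y := q)
  have key : ∀ s ∈ Icc 0 (dist p q), ∀ t ∈ Icc 0 (dist p q), s ≤ dist p m → dist p m < t →
      dist (γ s) (γ' (t - dist p m)) = t - s := by
    intro s hs t ht h1 h2
    have e1 := h.1 s ⟨hs.1, h1⟩ (dist p m) ⟨hpm, le_rfl⟩
    have e2 := h.1 0 ⟨le_rfl, hpm⟩ s ⟨hs.1, h1⟩
    have e3 := h'.1 0 ⟨le_rfl, hmq⟩ (t - dist p m) ⟨by linarith, by linarith [ht.2]⟩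
    have e4 := h'.1 (t - dist p m) ⟨by linarith, by linarith [ht.2]⟩ (dist m q) ⟨hmq, le_rfl⟩
    rw [h.2.2, abs_of_nonpos (by linarith)] at e1
    rw [h.2.1, abs_of_nonpos (by linarith [hs.1])] at e2
    rw [h'.2.1, abs_of_nonpos (by linarith)] at e3
    rw [h'.2.2, abs_of_nonpos (by linarith [ht.2])] at e4
    have t1 := dist_triangle (γ s) m (γ' (t - dist p m))
    have t2 := dist_triangle4 p (γ s) (γ' (t - dist p m)) q
    linarith
  refine ⟨?_, ?_, ?_⟩
  · intro s hs t ht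
    by_cases h1 : s ≤ dist p m <;> by_cases h2 : t ≤ dist p m
    · simp only [h1, h2, if_true]
      exact h.1 s ⟨hs.1, h1⟩ t ⟨ht.1, h2⟩
    · simp only [h1, h2, if_true, if_false]
      rw [key s hs t ht h1 (not_le.1 h2), abs_of_nonpos (by linarith)]; ring
    · simp only [h1, h2, if_true, if_false]
      rw [dist_comm, key t ht s hs h2 (not_le.1 h1), abs_of_nonneg (by linarith)]
    · simp only [h1, h2, if_false]
      rw [h'.1 _ ⟨by linarith, by linarith [hs.2]⟩ _ ⟨by linarith, by linarith [ht.2]⟩]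
      congr 1; ring
  · simp [h.2.1]
  · by_cases h1 : dist p q ≤ dist p m
    · have h0 : dist m q = 0 := by linarith
      have : m = q := dist_eq_zero.1 h0
      subst this
      simp [h.2.2]
    · simp only [h1, if_false]
      rw [← hb, add_sub_cancel_left, h'.2.2]

theorem mem_seg_iff (hS : IsBusemannSpace S) {seg : S → S → Set S}
    (hseg : ∀ x y : S, IsGeodesicSegment x y (seg x y)) (p m q : S) :
    m ∈ seg p q ↔ B p m q := by
  obtain ⟨γ, hγ, he⟩ := hseg p q
  rw [he]
  constructor
  · rintro ⟨t, ht, rfl⟩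
    have e1 := hγ.1 0 ⟨le_rfl, dist_nonneg⟩ t ht
    have e2 := hγ.1 t ht (dist p q) ⟨dist_nonneg, le_rfl⟩
    rw [hγ.2.1, abs_of_nonpos (by linarith [ht.1])] at e1
    rw [hγ.2.2, abs_of_nonpos (by linarith [ht.2])] at e2
    unfold B; linarith
  · intro hb
    obtain ⟨γ₁, h1⟩ := hS.1 p m
    obtain ⟨γ₂, h2⟩ := hS.1 m q
    have hm : dist p m ∈ Icc 0 (dist p q) :=
      ⟨dist_nonneg, by unfold B at hb; linarith [dist_nonneg (x := m) (y := q)]⟩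
    refine ⟨dist p m, hm, ?_⟩
    rw [geod_unique hS hγ (geod_concat h1 h2 hb) hm]
    simp [h1.2.2]

/-- clamp -/
def cl (s : ℝ) : ℝ := max 0 (min s 1)

theorem cl_mem (s : ℝ) : cl s ∈ Icc (0 : ℝ) 1 := by
  unfold cl; exact ⟨le_max_left _ _, max_le zero_le_one (min_le_right _ _)⟩

theorem cl_cont : Continuous cl := by unfold cl; fun_prop

theorem cl_rev (s : ℝ) : cl (1 - s) = 1 - cl s := by
  unfold cl
  rcases le_total s 0 with h | h
  · rw [min_eq_right (by linarith), min_eq_left (by linarith), max_eq_left h]; simp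
  · rcases le_total s 1 with h' | h'
    · rw [min_eq_left (by linarith), min_eq_left (by linarith), max_eq_right (by linarith),
        max_eq_right (by linarith)]
    · rw [min_eq_left (by linarith), min_eq_right (by linarith), max_eq_left (by linarith)]; simp

theorem exists_G (hS : IsBusemannSpace S) : ∃ G : S → S → ℝ → S,
    (∀ p q, G p q 0 = p) ∧ (∀ p q, G p q 1 = q) ∧ (∀ p q s, B p (G p q s) q) ∧
    (∀ p q s, G p q (1 - s) = G q p s) ∧
    Continuous (fun a : S × S × ℝ => G a.1 a.2.1 a.2.2) := by
  choose γ hγ using hS.1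
  have hm : ∀ (p q : S) (s : ℝ), cl s * dist p q ∈ Icc 0 (dist p q) := fun p q s =>
    ⟨mul_nonneg (cl_mem s).1 dist_nonneg, mul_le_of_le_one_left dist_nonneg (cl_mem s).2⟩
  refine ⟨fun p q s => γ p q (cl s * dist p q), ?_, ?_, ?_, ?_, ?_⟩
  · intro p q; simp [cl, (hγ p q).2.1]
  · intro p q; simp [cl, (hγ p q).2.2]
  · intro p q s
    exact (mem_seg_iff hS (seg := fun p q => γ p q '' Icc 0 (dist p q))
      (fun p q => ⟨γ p q, hγ p q, rfl⟩) p _ q).1 ⟨_, hm p q s, rfl⟩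
  · intro p q s
    have hr : IsGeodesicFromTo (fun t => γ q p (dist q p - t)) p q := by
      refine ⟨?_, ?_, ?_⟩
      · intro s hs t ht
        rw [dist_comm p q] at hs ht
        rw [(hγ q p).1 _ ⟨by linarith [hs.2], by linarith [hs.1]⟩ _
          ⟨by linarith [ht.2], by linarith [ht.1]⟩, abs_sub_comm]
        congr 1; ring
      · simp [(hγ q p).2.2]
      · simp [(hγ q p).2.1, dist_comm p q]
    have := geod_unique hS (hγ p q) hr (hm p q (1 - s))
    simp only at this ⊢
    rw [this, cl_rev, dist_comm p q]
    congr 1; ring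
  · rw [continuous_iff_continuousAt]
    rintro ⟨p, q, s⟩
    unfold ContinuousAt
    rw [tendsto_iff_dist_tendsto_zero]
    have hb : ∀ a : S × S × ℝ,
        dist (γ a.1 a.2.1 (cl a.2.2 * dist a.1 a.2.1)) (γ p q (cl s * dist p q)) ≤
        dist a.1 p + dist a.2.1 q + |cl a.2.2 - cl s| * dist p q := by
      rintro ⟨p', q', s'⟩
      have h1 := conv_bound hS (hγ p' q') (hγ p q) (cl_mem s')
      have h2 := (hγ p q).1 _ (hm p q s') _ (hm p q s)
      rw [← sub_mul, abs_mul, abs_of_nonneg (dist_nonneg (x := p) (y := q))] at h2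
      have h3 := dist_triangle (γ p' q' (cl s' * dist p' q')) (γ p q (cl s' * dist p q))
        (γ p q (cl s * dist p q))
      have hc := cl_mem s'
      have h4 : (1 - cl s') * dist p' p ≤ dist p' p :=
        mul_le_of_le_one_left dist_nonneg (by linarith [hc.1])
      have h5 : cl s' * dist q' q ≤ dist q' q :=
        mul_le_of_le_one_left dist_nonneg hc.2
      simp only
      linarith
    refine squeeze_zero (fun _ => dist_nonneg) hb ?_
    have hc : Continuous (fun a : S × S × ℝ =>
        dist a.1 p + dist a.2.1 q + |cl a.2.2 - cl s| * dist p q) := by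
      have := cl_cont
      fun_prop
    have := hc.tendsto (p, q, s)
    simpa using this

theorem B_self_right (p q : S) : B p q q := by simp [B]

theorem f12 {x y z1 z2 w m : S} (h1 : B y x z1) (hw : B z1 w z2)
    (a : B x m z1) (b : B w m z2) : B y x w := by
  unfold B at *
  have := dist_triangle y w z1
  have := dist_triangle z1 m z2
  have := dist_triangle x m w
  have := dist_triangle y x w
  have := dist_comm w z1
  have := dist_comm m z1
  have := dist_comm m w
  linarith

theorem f13 {x y z1 w m : S} (h1 : B y x z1)
    (a : B x m z1) (b : B w m y) : B y x w := by
  unfold B at *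
  have := dist_triangle y m z1
  have := dist_triangle x m w
  have := dist_triangle y x w
  have := dist_comm w y
  have := dist_comm m y
  have := dist_comm m w
  linarith

theorem f31 {x y z1 z2 w m : S} (h1 : B y x z1) (h2 : B y x z2) (hw : B z1 w z2)
    (a : B x m y) (b : B w m z1) : B y x w := by
  unfold B at *
  have := dist_triangle y m z1
  have := dist_triangle y m z2
  have := dist_triangle z1 x z2
  have := dist_triangle m w z2
  have := dist_triangle y w z2
  have := dist_triangle x m w
  have := dist_triangle y x w
  have := dist_comm w z1
  have := dist_comm m y
  have := dist_comm x y
  have := dist_comm x z1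
  have := dist_comm m w
  have := dist_nonneg (x := x) (y := m)
  linarith

theorem fanA {x y z1 z2 t : S} (h1 : B y x z1) (h2 : B y x z2)
    (a : B x t z2) (b : B z1 y t) : dist x y ≤ 0 := by
  unfold B at *
  have := dist_triangle z1 x t
  have := dist_triangle y t z2
  have := dist_comm y z1
  have := dist_comm x y
  have := dist_comm x z1
  linarith

theorem fanA' {x y z1 z2 w t : S} (h1 : B y x z1) (h2 : B y x z2) (hw : B z1 w z2)
    (a : B w t z2) (b : B z1 y t) : dist x y ≤ 0 := by
  unfold B at *
  have := dist_triangle z1 w t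
  have := dist_triangle y t z2
  have := dist_triangle z1 x z2
  have := dist_comm y z1
  have := dist_comm x y
  have := dist_comm x z1
  linarith

theorem fanB {x y z1 z2 w t : S} (h1 : B y x z1) (h2 : B y x z2) (hw : B z1 w z2)
    (a : B x t z2) (b : B y z1 t) : B y x w := by
  unfold B at *
  have := dist_triangle y x t
  have := dist_triangle z1 t z2
  have := dist_triangle x z1 w
  have := dist_triangle y w z2
  have := dist_triangle y x w
  linarith

theorem fanB' {x y z1 z2 w t : S} (h1 : B y x z1) (hw : B z1 w z2)
    (a : B w t z2) (b : B y z1 t) : B y x w := by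
  unfold B at *
  have := dist_triangle y w t
  have := dist_triangle z1 t z2
  have := dist_triangle x z1 w
  have := dist_triangle y x w
  linarith

theorem B_symm {p q r : S} (h : B p q r) : B r q p := by
  unfold B at *
  rw [dist_comm r q, dist_comm q p, dist_comm r p]; linarith

theorem main (hS : IsBusemannSurface S) (x y z1 z2 w : S) (hxy : x ≠ y)
    (h1 : B y x z1) (h2 : B y x z2) (hw : B z1 w z2) : B y x w := by
  by_contra hno
  obtain ⟨hB, ⟨e⟩⟩ := hS
  obtain ⟨G, G0, G1, GB, GR, GC⟩ := exists_G hB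
  set h : S ≃ₜ ℂ := e.trans Complex.equivRealProdCLM.symm.toHomeomorph with hdef
  clear_value h
  have hc : Continuous h := h.continuous
  have hne : ∀ {u v : S}, u ≠ v → h u - h v ≠ 0 := fun huv =>
    sub_ne_zero.2 (fun hh => huv (h.injective hh))
  have hxy' : 0 < dist x y := dist_pos.2 hxy
  have hno' : dist y w < dist y x + dist x w :=
    lt_of_le_of_ne (dist_triangle _ _ _) (fun hh => hno hh.symm)
  let T : S → S → S → ℂ := fun p u v => dl (fun s => h (G u v s) - h p)
  have gcont : ∀ u v, Continuous (fun s : ℝ => G u v s) := fun u v =>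
    GC.comp (by fun_prop : Continuous (fun s : ℝ => ((u, v, s) : S × S × ℝ)))
  have Tcont : ∀ p u v, Continuous (fun s : ℝ => h (G u v s) - h p) := fun p u v =>
    (hc.comp (gcont u v)).sub continuous_const
  have off : ∀ {p u v : S}, ¬ B u p v → ∀ s, h (G u v s) - h p ≠ 0 := fun {p u v} hp s =>
    hne (fun hh => hp (hh ▸ GB u v s))
  -- reversal
  have Trev : ∀ {p u v : S}, ¬ B u p v → T p v u = - T p u v := by
    intro p u v hp
    have := dl_rev _ (Tcont p u v) (off hp)
    simp only [GR] at this
    exact this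
  -- fan
  have fan : ∀ {p u v v' : S}, (∀ t, B v t v' → ¬ B u p t) →
      T p u v + T p v v' = T p u v' := by
    intro p u v v' hp
    have := dl_square (fun s t => h (G u (G v v' t) s) - h p)
      ((hc.comp (GC.comp (by
        have := gcont v v'
        fun_prop : Continuous (fun a : ℝ × ℝ => ((u, G v v' a.2, a.1) : S × S × ℝ))))).sub
        continuous_const)
      (fun s t => off (hp _ (GB v v' t)) s)
    simp only [G0, G1] at this
    have hup : h u - h p ≠ 0 := by
      have := off (hp _ (GB v v' 0)) 0
      rwa [G0] at this
    rw [dl_const _ hup] at this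
    simpa [T] using this
  -- squares
  have sq : ∀ {a b p q : S}, (∀ m, B a m p → ¬ B b m q) →
      dl (fun s => h (G a p s) - h b) + T p b q = dl (fun t => h a - h (G b q t)) + T q a p := by
    intro a b p q hd
    have hnz : ∀ s t, h (G a p s) - h (G b q t) ≠ 0 := fun s t =>
      hne (fun hh => hd _ (GB a p s) (hh ▸ GB b q t))
    have := dl_square (fun s t => h (G a p s) - h (G b q t))
      (by
        have h1 := gcont a p
        have h2 := gcont b q
        fun_prop) hnz
    simp only [G0, G1] at this
    rw [← this]
    congr 1
    have h3 := dl_neg _ (Tcont p b q) (fun t => by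
      have := hnz 1 t
      rw [G1] at this
      intro h4
      apply this
      rw [← neg_sub, h4, neg_zero])
    simp only [neg_sub] at h3
    exact h3.symm
  have exT : ∀ {p u v : S}, ¬ B u p v →
      Complex.exp (T p u v) = (h v - h p) / (h u - h p) := by
    intro p u v hp
    have := dl_exp _ (Tcont p u v) (off hp)
    simpa only [G0, G1] using this
  have hw' : B z2 w z1 := B_symm hw
  have d12 : ∀ m, B x m z1 → ¬ B w m z2 := fun m a b => hno (f12 h1 hw a b)
  have d21 : ∀ m, B x m z2 → ¬ B w m z1 := fun m a b => hno (f12 h2 hw' a b)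
  have d13 : ∀ m, B x m z1 → ¬ B w m y := fun m a b => hno (f13 h1 a b)
  have d23 : ∀ m, B x m z2 → ¬ B w m y := fun m a b => hno (f13 h2 a b)
  have d31 : ∀ m, B x m y → ¬ B w m z1 := fun m a b => hno (f31 h1 h2 hw a b)
  have d32 : ∀ m, B x m y → ¬ B w m z2 := fun m a b => hno (f31 h2 h1 hw' a b)
  have s12 := sq d12
  have s21 := sq d21
  have s13 := sq d13
  have s23 := sq d23
  have s31 := sq d31
  have s32 := sq d32
  have nb : ∀ {p q : S}, (∀ m, B x m p → ¬ B w m q) → ¬ B w p q :=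
    fun hd => hd _ (B_self_right _ _)
  have na : ∀ {p q : S}, (∀ m, B x m p → ¬ B w m q) → ¬ B x q p :=
    fun hd hh => hd _ hh (B_self_right _ _)
  -- fillings
  have k1 := fan (p := y) (u := z1) (v := x) (v' := z2)
    (fun t a b => absurd (fanA h1 h2 a b) (not_le.2 hxy'))
  have k2 := fan (p := y) (u := z1) (v := w) (v' := z2)
    (fun t a b => absurd (fanA' h1 h2 hw a b) (not_le.2 hxy'))
  have k3 := fan (p := z1) (u := y) (v := x) (v' := z2)
    (fun t a b => hno (fanB h1 h2 hw a b))
  have k4 := fan (p := z1) (u := y) (v := w) (v' := z2)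
    (fun t a b => hno (fanB' h1 hw a b))
  have k5 := fan (p := z2) (u := y) (v := x) (v' := z1)
    (fun t a b => hno (fanB h2 h1 hw' a b))
  have k6 := fan (p := z2) (u := y) (v := w) (v' := z1)
    (fun t a b => hno (fanB' h2 hw' a b))
  rw [Trev (na d13)] at k1
  rw [Trev (nb d31)] at k2
  rw [Trev (na d31)] at k3
  rw [Trev (nb d13)] at k4
  rw [Trev (na d32)] at k5
  rw [Trev (nb d23)] at k6
  have hsum : T z1 w y - T z1 w z2 + T y w z2 - T y w z1 + T z2 w z1 - T z2 w y = 0 := by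
    linear_combination (1 / 2 : ℂ) * (s13 - s12 + s32 - s31 + s21 - s23) +
      (1 / 2 : ℂ) * ((k2 - k1) - (k4 - k3) + (k6 - k5))
  have hex := congrArg Complex.exp hsum
  have n1 : h w - h z1 ≠ 0 := by have := off (nb d12) 0; rwa [G0] at this
  have n2 : h w - h z2 ≠ 0 := by have := off (nb d21) 0; rwa [G0] at this
  have n3 : h w - h y ≠ 0 := by have := off (nb d31) 0; rwa [G0] at this
  have n12 : h z2 - h z1 ≠ 0 := by have := off (nb d12) 1; rwa [G1] at this
  have n13 : h y - h z1 ≠ 0 := by have := off (nb d13) 1; rwa [G1] at this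
  have n23 : h y - h z2 ≠ 0 := by have := off (nb d23) 1; rwa [G1] at this
  simp only [Complex.exp_add, Complex.exp_sub, Complex.exp_zero] at hex
  rw [exT (nb d12), exT (nb d13), exT (nb d21), exT (nb d23), exT (nb d31), exT (nb d32),
    ← neg_sub (h y) (h z1), ← neg_sub (h y) (h z2), ← neg_sub (h z2) (h z1)] at hex
  generalize h w - h z1 = a1 at *
  generalize h w - h z2 = a2 at *
  generalize h w - h y = a3 at *
  generalize h z2 - h z1 = b1 at *
  generalize h y - h z1 = b2 at *
  generalize h y - h z2 = b3 at *
  field_simp at hex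
  norm_num at hex

end BusCone

end

/-- the cone `C(x,y) = {z : x ∈ [y,z]}` is convex and closed. -/
theorem busemann_surface_cone_convex_closed {S : Type*} [MetricSpace S]
    (hS : IsBusemannSurface S)
    (seg : S → S → Set S) (hseg : ∀ x y : S, IsGeodesicSegment x y (seg x y))
    (x y : S) (hxy : x ≠ y) :
    SegConvex seg {z : S | x ∈ seg y z} ∧ IsClosed {z : S | x ∈ seg y z} := by
  simp only [BusCone.mem_seg_iff hS.1 hseg]
  constructor
  · intro z1 h1 z2 h2 w hw
    exact BusCone.main hS x y z1 z2 w hxy h1 h2 ((BusCone.mem_seg_iff hS.1 hseg _ _ _).1 hw)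
  · unfold BusCone.B
    exact isClosed_eq (by fun_prop) (by fun_prop)
end

section
/- (Peano axiom for Busemann surfaces) Let (S,d) be a Busemann surface and let x, y, z ∈ S, p ∈ [x,y], q ∈ [x,z], and u ∈ [p,q]. Then there exists a point v ∈ [y,z] such that u ∈ [x,v]. -/
open Metric Set MeasureTheory

theorem bs_exists_log {E : Type*} [NormedAddCommGroup E] [NormedSpace ℝ E] (D : Set E) (c : E)
    (hc : c ∈ D) (hD : StarConvex ℝ c D) (f : E → ℂ) (hf : ContinuousOn f D)
    (h0 : ∀ p ∈ D, f p ≠ 0) :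
    ∃ L : E → ℂ, ContinuousOn L D ∧ ∀ p ∈ D, Complex.exp (L p) = f p := by
  classical
  have hmem : ∀ (t : unitInterval) (a : D), c + (t : ℝ) • ((a : E) - c) ∈ D := by
    intro t a
    have := hD a.2 (a := 1 - (t:ℝ)) (b := (t:ℝ)) (by linarith [t.2.2]) t.2.1 (by ring)
    convert this using 1
    module
  let H0 : unitInterval × D → D := fun x => ⟨c + (x.1 : ℝ) • ((x.2 : E) - c), hmem x.1 x.2⟩
  have hH0 : Continuous H0 := by
    apply Continuous.subtype_mk
    fun_prop
  let F : D → {z : ℂ // z ≠ 0} := fun a => ⟨f a, h0 a a.2⟩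
  have hF : Continuous F := Continuous.subtype_mk (continuousOn_iff_continuous_domRestrict.mp hf) _
  let H : C(unitInterval × D, {z : ℂ // z ≠ 0}) := ⟨F ∘ H0, hF.comp hH0⟩
  let g : C(D, ℂ) := ContinuousMap.const _ (Complex.log (f c))
  have H_0 : ∀ a, H (0, a) = (fun z : ℂ ↦ (⟨_, z.exp_ne_zero⟩ : {z : ℂ // z ≠ 0})) (g a) := by
    intro a
    apply Subtype.ext
    simp [H, F, H0, g, Complex.exp_log (h0 c hc)]
  let Lt := Complex.isCoveringMap_exp.liftHomotopy H g H_0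
  have hLt := Complex.isCoveringMap_exp.liftHomotopy_lifts H g H_0
  refine ⟨fun p => if h : p ∈ D then Lt (1, ⟨p, h⟩) else 0, ?_, ?_⟩
  · rw [continuousOn_iff_continuous_domRestrict]
    have : Continuous fun a : D => Lt (1, a) := by fun_prop
    convert this using 1
    ext a
    simp
  · intro p hp
    have := congrArg Subtype.val (congrFun hLt (1, ⟨p, hp⟩))
    simp only [hp, dite_true]
    simp only [Function.comp] at this
    refine this.trans ?_
    simp [H, F, H0]

theorem bs_log_unique (s : Set ℝ) (hs : IsPreconnected s) (L K : ℝ → ℂ) (hL : ContinuousOn L s)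
    (hK : ContinuousOn K s) (h : ∀ t ∈ s, Complex.exp (L t) = Complex.exp (K t)) (a b : ℝ)
    (ha : a ∈ s) (hb : b ∈ s) : L b - L a = K b - K a := by
  have := Complex.isCoveringMap_exp.eqOn_of_comp_eqOn hs (g₁ := fun t => L t + (K a - L a)) (g₂ := K)
    (by fun_prop) hK (by
      intro t ht
      apply Subtype.ext
      simp only [Function.comp]
      rw [Complex.exp_add, Complex.exp_sub, h a ha, h t ht, div_self (Complex.exp_ne_zero _), mul_one])
    ha (by ring)
  have := this hb
  simp only at this
  rw [← this]; ring

open Classical in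
noncomputable def bsdl (f : ℝ → ℂ) (a b : ℝ) : ℂ :=
  if h : ∃ L : ℝ → ℂ, ContinuousOn L (Icc a b) ∧ ∀ t ∈ Icc a b, Complex.exp (L t) = f t then
    h.choose b - h.choose a else 0

theorem bsdl_eq {f : ℝ → ℂ} {a b : ℝ} (hab : a ≤ b) (L : ℝ → ℂ) (hL : ContinuousOn L (Icc a b))
    (hf : ∀ t ∈ Icc a b, Complex.exp (L t) = f t) : bsdl f a b = L b - L a := by
  have h : ∃ L : ℝ → ℂ, ContinuousOn L (Icc a b) ∧ ∀ t ∈ Icc a b, Complex.exp (L t) = f t :=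
    ⟨L, hL, hf⟩
  rw [bsdl, dif_pos h]
  refine bs_log_unique (Icc a b) isPreconnected_Icc _ _ h.choose_spec.1 hL ?_ a b
    (left_mem_Icc.2 hab) (right_mem_Icc.2 hab)
  intro t ht
  rw [h.choose_spec.2 t ht, hf t ht]

def bsD (M : ℝ) : Set (ℝ × ℝ) :=
  {p | p.1 ∈ Icc (-M) M ∧ p.2 ∈ Icc (-M) M ∧ (p.1 ≠ p.2 ∨ p = (0, 0))}

theorem bs_exp_neg (z : ℂ) : Complex.exp (z + Real.pi * Complex.I) = - Complex.exp z := by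
  rw [Complex.exp_add, Complex.exp_pi_mul_I]; ring

theorem bs_K (M : ℝ) (hM : 0 < M) (α γ : ℝ → ℂ) (a b : ℂ) (hα0 : α (-M) = a) (hα1 : α M = b)
    (A : ℝ × ℝ → ℂ) (hA : ContinuousOn A (bsD M))
    (hexp : ∀ p ∈ bsD M, Complex.exp (A p) = α p.1 - γ p.2) :
    bsdl (fun s => α s - γ 0) (-M) M = bsdl (fun t => γ t - b) (-M) 0 +
      bsdl (fun t => γ t - a) 0 M - (A (-M, M) - A (M, -M)) := by
  have e1 : ∀ s ∈ Icc (-M) M, (s, (0:ℝ)) ∈ bsD M := by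
    intro s hs
    refine ⟨hs, ⟨by simp; linarith, by simp; linarith⟩, ?_⟩
    by_cases h : s = 0
    · right; simp [h]
    · left; simpa using h
  have e2 : ∀ t ∈ Icc (-M) 0, (M, t) ∈ bsD M := by
    intro t ht
    refine ⟨⟨by simp; linarith, by simp⟩, ⟨ht.1, by simp; linarith [ht.2]⟩, Or.inl ?_⟩
    simp only; linarith [ht.2]
  have e3 : ∀ t ∈ Icc 0 M, (-M, t) ∈ bsD M := by
    intro t ht
    refine ⟨⟨by simp, by simp; linarith⟩, ⟨by simp; linarith [ht.1], ht.2⟩, Or.inl ?_⟩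
    simp only; linarith [ht.1]
  rw [bsdl_eq (by linarith) (fun s => A (s, 0)) (hA.comp (by fun_prop) e1)
      (fun s hs => by rw [hexp _ (e1 s hs)]),
    bsdl_eq (by linarith) (fun t => A (M, t) + Real.pi * Complex.I)
      ((hA.comp (by fun_prop) e2).add continuousOn_const)
      (fun t ht => by rw [bs_exp_neg, hexp _ (e2 t ht), hα1]; ring),
    bsdl_eq (by linarith) (fun t => A (-M, t) + Real.pi * Complex.I)
      ((hA.comp (by fun_prop) e3).add continuousOn_const)
      (fun t ht => by rw [bs_exp_neg, hexp _ (e3 t ht), hα0]; ring)]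
  ring

theorem bs_star (M : ℝ) (hM : 0 < M) : StarConvex ℝ ((0:ℝ), (0:ℝ)) (bsD M) := by
  have h00 : ((0:ℝ), (0:ℝ)) ∈ bsD M := ⟨⟨by simp; linarith, by simp; linarith⟩,
    ⟨by simp; linarith, by simp; linarith⟩, Or.inr rfl⟩
  rw [starConvex_iff_forall_pos h00]
  rintro ⟨s, t⟩ ⟨hs, ht, h⟩ a b ha hb hab
  simp only at hs ht
  have hb1 : b ≤ 1 := by linarith
  have : a • ((0:ℝ), (0:ℝ)) + b • (s, t) = (b * s, b * t) := by simp
  rw [this]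
  refine ⟨⟨by simp only; nlinarith [hs.1], by simp only; nlinarith [hs.2]⟩,
    ⟨by simp only; nlinarith [ht.1], by simp only; nlinarith [ht.2]⟩, ?_⟩
  rcases h with h | h
  · left; simp only at h ⊢
    intro h'; exact h (mul_left_cancel₀ hb.ne' h')
  · right
    simp only [Prod.mk.injEq] at h ⊢
    simp [h]

theorem bs_exists_A (M : ℝ) (hM : 0 < M) (α γ : ℝ → ℂ) (hα : ContinuousOn α (Icc (-M) M))
    (hγ : ContinuousOn γ (Icc (-M) M)) (h0 : α 0 ≠ γ 0)
    (h : ∀ s ∈ Icc (-M) M, ∀ t ∈ Icc (-M) M, α s = γ t → s = t) :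
    ∃ A : ℝ × ℝ → ℂ, ContinuousOn A (bsD M) ∧
      ∀ p ∈ bsD M, Complex.exp (A p) = α p.1 - γ p.2 := by
  refine bs_exists_log (bsD M) (0, 0) ⟨⟨by simp; linarith, by simp; linarith⟩,
    ⟨by simp; linarith, by simp; linarith⟩, Or.inr rfl⟩ (bs_star M hM) _ ?_ ?_
  · exact (hα.comp continuous_fst.continuousOn (fun p hp => hp.1)).sub
      (hγ.comp continuous_snd.continuousOn (fun p hp => hp.2.1))
  · rintro p ⟨h1, h2, h3⟩ h4
    have h5 := h _ h1 _ h2 (sub_eq_zero.1 h4)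
    rcases h3 with h3 | h3
    · exact h3 h5
    · subst h3; exact h0 (sub_eq_zero.1 h4)

theorem bs_swap (M : ℝ) (α γ : ℝ → ℂ) (A : ℝ × ℝ → ℂ) (hA : ContinuousOn A (bsD M))
    (hexp : ∀ p ∈ bsD M, Complex.exp (A p) = α p.1 - γ p.2) :
    ContinuousOn (fun p : ℝ × ℝ => A (p.2, p.1) + Real.pi * Complex.I) (bsD M) ∧
    ∀ p ∈ bsD M, Complex.exp (A (p.2, p.1) + Real.pi * Complex.I) = γ p.1 - α p.2 := by
  have e : ∀ p ∈ bsD M, (p.2, p.1) ∈ bsD M := by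
    rintro p ⟨h1, h2, h3⟩
    refine ⟨h2, h1, ?_⟩
    rcases h3 with h3 | h3
    · exact Or.inl h3.symm
    · right; subst h3; rfl
  refine ⟨(hA.comp (by fun_prop) e).add continuousOn_const, fun p hp => ?_⟩
  rw [bs_exp_neg, hexp _ (e p hp)]; ring

theorem bs_theta (M : ℝ) (hM : 0 < M) (α β γ : ℝ → ℂ) (a b : ℂ)
    (hα : ContinuousOn α (Icc (-M) M)) (hβ : ContinuousOn β (Icc (-M) M))
    (hγ : ContinuousOn γ (Icc (-M) M))
    (hα0 : α (-M) = a) (hα1 : α M = b) (hβ0 : β (-M) = a) (hβ1 : β M = b)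
    (hγ0 : γ (-M) = a) (hγ1 : γ M = b)
    (hαβ : ∀ s ∈ Icc (-M) M, ∀ t ∈ Icc (-M) M, α s = β t → s = t)
    (hαγ : ∀ s ∈ Icc (-M) M, ∀ t ∈ Icc (-M) M, α s = γ t → s = t)
    (hβγ : ∀ s ∈ Icc (-M) M, ∀ t ∈ Icc (-M) M, β s = γ t → s = t)
    (h1 : α 0 ≠ β 0) (h2 : α 0 ≠ γ 0) (h3 : β 0 ≠ γ 0)
    (w1 : bsdl (fun s => α s - γ 0) (-M) M = bsdl (fun s => β s - γ 0) (-M) M)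
    (w2 : bsdl (fun s => α s - β 0) (-M) M = bsdl (fun s => γ s - β 0) (-M) M)
    (w3 : bsdl (fun s => β s - α 0) (-M) M = bsdl (fun s => γ s - α 0) (-M) M) : False := by
  obtain ⟨A, cA, eA⟩ := bs_exists_A M hM α β hα hβ h1 hαβ
  obtain ⟨B, cB, eB⟩ := bs_exists_A M hM α γ hα hγ h2 hαγ
  obtain ⟨C, cC, eC⟩ := bs_exists_A M hM β γ hβ hγ h3 hβγ
  obtain ⟨cA', eA'⟩ := bs_swap M α β A cA eA
  obtain ⟨cB', eB'⟩ := bs_swap M α γ B cB eB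
  obtain ⟨cC', eC'⟩ := bs_swap M β γ C cC eC
  rw [bs_K M hM α γ a b hα0 hα1 B cB eB, bs_K M hM β γ a b hβ0 hβ1 C cC eC] at w1
  rw [bs_K M hM α β a b hα0 hα1 A cA eA, bs_K M hM γ β a b hγ0 hγ1 _ cC' eC'] at w2
  rw [bs_K M hM β α a b hβ0 hβ1 _ cA' eA', bs_K M hM γ α a b hγ0 hγ1 _ cB' eB'] at w3
  have m1 : ((-M : ℝ), M) ∈ bsD M := ⟨⟨by simp, by simp; linarith⟩, ⟨by simp; linarith, by simp⟩,
    Or.inl (by simp only; linarith)⟩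
  have m2 : (M, (-M : ℝ)) ∈ bsD M := ⟨⟨by simp; linarith, by simp⟩, ⟨by simp, by simp; linarith⟩,
    Or.inl (by simp only; linarith)⟩
  have hz : A (-M, M) = A (M, -M) := by
    linear_combination (w3 - w2 - w1) / 2
  have q1 := eA _ m1
  have q2 := eA _ m2
  simp only [hα0, hα1, hβ0, hβ1] at q1 q2
  rw [hz, q2] at q1
  have : b - a ≠ 0 := by rw [← q2]; exact Complex.exp_ne_zero _
  apply this
  linear_combination q1 / 2

/-- Metric betweenness. -/
def bsB {S : Type*} [MetricSpace S] (a r b : S) : Prop := dist a r + dist r b = dist a b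

section bsBetween
variable {S : Type*} [MetricSpace S] {a b c r : S}

theorem bsB.symm (h : bsB a r b) : bsB b r a := by
  unfold bsB at *
  rw [dist_comm b r, dist_comm r a, dist_comm b a]; linarith

theorem bsB.t1 (h : bsB a r b) (h' : bsB a b c) : bsB a r c := by
  unfold bsB at *
  linarith [dist_triangle a r c, dist_triangle r b c]

theorem bsB.t2 (h : bsB a r b) (h' : bsB a b c) : bsB r b c := by
  unfold bsB at *
  linarith [dist_triangle a r c, dist_triangle r b c]

theorem bsB_left (a b : S) : bsB a a b := by simp [bsB]
theorem bsB_right (a b : S) : bsB a b b := by simp [bsB]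

end bsBetween

structure BsG {S : Type*} [MetricSpace S] (G : S → S → ℝ → S) : Prop where
  zero : ∀ x y, G x y 0 = x
  one : ∀ x y, G x y 1 = y
  dist : ∀ x y, ∀ s ∈ Icc (0:ℝ) 1, ∀ t ∈ Icc (0:ℝ) 1, dist (G x y s) (G x y t) = |s - t| * dist x y
  conv : ∀ x y y', ∀ t ∈ Icc (0:ℝ) 1, Dist.dist (G x y t) (G x y' t) ≤ t * Dist.dist y y'
  btw : ∀ x r y, bsB x r y → ∃ t ∈ Icc (0:ℝ) 1, G x y t = r

section bsGeo
variable {S : Type*} [MetricSpace S] {G : S → S → ℝ → S} (hG : BsG G)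
include hG

theorem BsG.dl (x y : S) {t : ℝ} (ht : t ∈ Icc (0:ℝ) 1) : Dist.dist x (G x y t) = t * Dist.dist x y := by
  have := hG.dist x y 0 (by simp) t ht
  rwa [hG.zero, zero_sub, abs_neg, abs_of_nonneg ht.1] at this

theorem BsG.dr (x y : S) {t : ℝ} (ht : t ∈ Icc (0:ℝ) 1) :
    Dist.dist (G x y t) y = (1 - t) * Dist.dist x y := by
  have := hG.dist x y t ht 1 (by simp)
  rwa [hG.one, abs_sub_comm, abs_of_nonneg (by linarith [ht.2])] at this

theorem BsG.mem (x y : S) {t : ℝ} (ht : t ∈ Icc (0:ℝ) 1) : bsB x (G x y t) y := by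
  unfold bsB
  rw [hG.dl x y ht, hG.dr x y ht]; ring

theorem BsG.rev (x y : S) {t : ℝ} (ht : t ∈ Icc (0:ℝ) 1) : G y x t = G x y (1 - t) := by
  obtain ⟨s, hs, h⟩ := hG.btw x _ y (hG.mem y x ht).symm
  have h1 := hG.dl x y hs
  have h2 := hG.dr y x ht
  rw [h, dist_comm, h2, dist_comm y x] at h1
  rcases eq_or_ne (Dist.dist x y) 0 with h0 | h0
  · have e1 := hG.dl x y hs
    have e2 := hG.dl x y (t := 1 - t) ⟨by linarith [ht.2], by linarith [ht.1]⟩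
    rw [h0, mul_zero, dist_eq_zero] at e1 e2
    rw [← h, ← e1, ← e2]
  · rw [← h, ← mul_right_cancel₀ h0 h1]

theorem BsG.lin {a b r r' : S} (h : bsB a r b) (h' : bsB a r' b) :
    (bsB a r r' ∧ bsB r r' b) ∨ (bsB a r' r ∧ bsB r' r b) := by
  obtain ⟨s, hs, rfl⟩ := hG.btw _ _ _ h
  obtain ⟨t, ht, rfl⟩ := hG.btw _ _ _ h'
  have e := hG.dist a b s hs t ht
  unfold bsB
  rw [dist_comm (G a b t) (G a b s), e, hG.dl a b hs, hG.dl a b ht, hG.dr a b hs, hG.dr a b ht]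
  rcases le_total s t with hst | hst
  · left; rw [abs_of_nonpos (by linarith)]; constructor <;> ring
  · right; rw [abs_of_nonneg (by linarith)]; constructor <;> ring

theorem BsG.cont (x y : S) : ContinuousOn (G x y) (Icc 0 1) := by
  have : LipschitzOnWith ⟨Dist.dist x y, dist_nonneg⟩ (G x y) (Icc 0 1) := by
    apply LipschitzOnWith.of_dist_le_mul
    intro s hs t ht
    rw [hG.dist x y s hs t ht, Real.dist_eq, mul_comm]
    rfl
  exact this.continuousOn

theorem BsG.cont_cone (x y z : S) :
    ContinuousOn (fun p : ℝ × ℝ => G x (G y z p.1) p.2) (Icc 0 1 ×ˢ Icc 0 1) := by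
  rintro ⟨s, t⟩ ⟨hs, ht⟩
  simp only at hs ht
  rw [ContinuousWithinAt, tendsto_iff_dist_tendsto_zero]
  have hb : ∀ p ∈ (Icc (0:ℝ) 1 ×ˢ Icc (0:ℝ) 1),
      Dist.dist (G x (G y z p.1) p.2) (G x (G y z s) t) ≤
        |p.1 - s| * Dist.dist y z + |p.2 - t| * Dist.dist x (G y z s) := by
    rintro ⟨a, b⟩ ⟨ha, hb⟩
    simp only at ha hb ⊢
    have h1 := hG.conv x (G y z a) (G y z s) b hb
    have h2 := hG.dist x (G y z s) b hb t ht
    have h3 := hG.dist y z a ha s hs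
    have h4 := dist_triangle (G x (G y z a) b) (G x (G y z s) b) (G x (G y z s) t)
    have h5 : b * Dist.dist (G y z a) (G y z s) ≤ Dist.dist (G y z a) (G y z s) :=
      mul_le_of_le_one_left dist_nonneg hb.2
    linarith
  refine squeeze_zero' (Filter.Eventually.of_forall fun _ => dist_nonneg)
    (Filter.eventually_of_mem self_mem_nhdsWithin hb) ?_
  have : Continuous fun p : ℝ × ℝ => |p.1 - s| * Dist.dist y z + |p.2 - t| * Dist.dist x (G y z s) := by
    fun_prop
  have h := this.tendsto (s, t)
  simp only [sub_self, abs_zero, zero_mul, add_zero] at h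
  exact h.mono_left nhdsWithin_le_nhds

end bsGeo

/-- variation of log along a geodesic -/
noncomputable def bsDv {S : Type*} (φ : S → ℂ) (G : S → S → ℝ → S) (r x y : S) : ℂ :=
  bsdl (fun t => φ (G x y t) - φ r) 0 1

section bsWind
variable {S : Type*} [MetricSpace S] {G : S → S → ℝ → S} (hG : BsG G)
  {φ : S → ℂ} (hφ : Continuous φ) (hi : Function.Injective φ)
include hG hφ hi

theorem bs_lift1 (r x y : S) (h : ¬ bsB x r y) : ∃ L : ℝ → ℂ, ContinuousOn L (Icc 0 1) ∧
    ∀ t ∈ Icc (0:ℝ) 1, Complex.exp (L t) = φ (G x y t) - φ r := by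
  refine bs_exists_log (Icc 0 1) 0 (by simp) ((convex_Icc 0 1).starConvex (by simp)) _ ?_ ?_
  · exact (hφ.comp_continuousOn (hG.cont x y)).sub continuousOn_const
  · intro t ht h'
    have := hi (sub_eq_zero.1 h')
    rw [← this] at h
    exact h (hG.mem x y ht)

theorem bs_Dv_symm (r x y : S) (h : ¬ bsB x r y) : bsDv φ G r y x = - bsDv φ G r x y := by
  obtain ⟨L, cL, eL⟩ := bs_lift1 hG hφ hi r x y h
  have hm : ∀ t ∈ Icc (0:ℝ) 1, 1 - t ∈ Icc (0:ℝ) 1 := fun t ht =>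
    ⟨by linarith [ht.2], by linarith [ht.1]⟩
  rw [bsDv, bsDv, bsdl_eq zero_le_one L cL eL,
    bsdl_eq zero_le_one (fun t => L (1 - t)) (cL.comp (by fun_prop) hm)
      (fun t ht => by rw [eL _ (hm t ht), hG.rev x y ht])]
  simp

theorem bs_cone (r x y z : S) (h : ∀ w, bsB y w z → ¬ bsB x r w) :
    bsDv φ G r x y + bsDv φ G r y z = bsDv φ G r x z := by
  obtain ⟨L, cL, eL⟩ := bs_exists_log (Icc (0:ℝ) 1 ×ˢ Icc (0:ℝ) 1) (0, 0) (by simp)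
    (((convex_Icc (0:ℝ) 1).prod (convex_Icc (0:ℝ) 1)).starConvex (by simp))
    (fun p => φ (G x (G y z p.1) p.2) - φ r)
    ((hφ.comp_continuousOn (hG.cont_cone x y z)).sub continuousOn_const)
    (by
      rintro ⟨s, t⟩ ⟨hs, ht⟩ h'
      simp only at hs ht
      have := hi (sub_eq_zero.1 h')
      exact h _ (hG.mem y z hs) (this ▸ hG.mem x (G y z s) ht))
  have i0 : (0:ℝ) ∈ Icc (0:ℝ) 1 := by simp
  have i1 : (1:ℝ) ∈ Icc (0:ℝ) 1 := by simp
  have hc0 : ∀ s ∈ Icc (0:ℝ) 1, (s, (0:ℝ)) ∈ Icc (0:ℝ) 1 ×ˢ Icc (0:ℝ) 1 := fun s hs => ⟨hs, i0⟩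
  have hc1 : ∀ s ∈ Icc (0:ℝ) 1, (s, (1:ℝ)) ∈ Icc (0:ℝ) 1 ×ˢ Icc (0:ℝ) 1 := fun s hs => ⟨hs, i1⟩
  have hr0 : ∀ s ∈ Icc (0:ℝ) 1, ((0:ℝ), s) ∈ Icc (0:ℝ) 1 ×ˢ Icc (0:ℝ) 1 := fun s hs => ⟨i0, hs⟩
  have hr1 : ∀ s ∈ Icc (0:ℝ) 1, ((1:ℝ), s) ∈ Icc (0:ℝ) 1 ×ˢ Icc (0:ℝ) 1 := fun s hs => ⟨i1, hs⟩
  have k0 := bs_log_unique (Icc 0 1) isPreconnected_Icc (fun s => L (s, 0)) (fun _ => L (0, 0))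
    (cL.comp (by fun_prop) hc0) continuousOn_const (by
      intro t ht
      rw [eL _ (hc0 t ht), eL _ (hc0 0 i0)]
      simp [hG.zero]) 0 1 i0 i1
  rw [bsDv, bsDv, bsDv, bsdl_eq zero_le_one (fun t => L (0, t)) (cL.comp (by fun_prop) hr0)
      (fun t ht => by rw [eL _ (hr0 t ht)]; simp [hG.zero]),
    bsdl_eq zero_le_one (fun t => L (t, 1)) (cL.comp (by fun_prop) hc1)
      (fun t ht => by rw [eL _ (hc1 t ht)]; simp [hG.one]),
    bsdl_eq zero_le_one (fun t => L (1, t)) (cL.comp (by fun_prop) hr1)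
      (fun t ht => by rw [eL _ (hr1 t ht)]; simp [hG.one])]
  linear_combination k0

end bsWind

/-- clamp -/
noncomputable def bsc (x : ℝ) : ℝ := max 0 (min 1 x)

theorem bsc_mem (x : ℝ) : bsc x ∈ Icc (0:ℝ) 1 := ⟨le_max_left _ _, by simp [bsc]⟩
theorem bsc_cont : Continuous bsc := by unfold bsc; fun_prop
theorem bsc_one {x : ℝ} (h : 1 ≤ x) : bsc x = 1 := by simp [bsc, h]
theorem bsc_mid {x : ℝ} (h0 : 0 ≤ x) (h : x ≤ 1) : bsc x = x := by simp [bsc, h, h0]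
theorem bsc_zero : bsc 0 = 0 := by simp [bsc]

/-- the path p → w → z -/
noncomputable def bsP {S : Type*} [MetricSpace S] (G : S → S → ℝ → S) (M : ℝ) (p z w : S) (s : ℝ) :
    S :=
  if s ≤ 0 then G p w (bsc ((s + M) / dist p w)) else G z w (bsc ((M - s) / dist z w))

section bsPath
variable {S : Type*} [MetricSpace S] {G : S → S → ℝ → S} (hG : BsG G) {M : ℝ} {p z w : S}
  (h1 : 0 < dist p w) (h2 : 0 < dist z w) (m1 : dist p w ≤ M) (m2 : dist z w ≤ M)

include h1 m1 in
theorem bs_c1 {s : ℝ} (hs : 0 ≤ s) : bsc ((s + M) / dist p w) = 1 :=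
  bsc_one (by rw [le_div_iff₀ h1]; linarith)

include h2 m2 in
theorem bs_c2 {s : ℝ} (hs : s ≤ 0) : bsc ((M - s) / dist z w) = 1 :=
  bsc_one (by rw [le_div_iff₀ h2]; linarith)

include hG h1 m1 in
theorem bsP_zero : bsP G M p z w 0 = w := by
  rw [bsP, if_pos le_rfl, bs_c1 h1 m1 le_rfl, hG.one]

include hG h1 m1 in
theorem bsP_start : bsP G M p z w (-M) = p := by
  rw [bsP, if_pos (by linarith)]
  simp [bsc_zero, hG.zero]

include hG h1 m1 in
theorem bsP_end : bsP G M p z w M = z := by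
  rw [bsP, if_neg (by linarith)]
  simp [bsc_zero, hG.zero]

include hG h1 h2 m1 m2 in
theorem bsP_cont : Continuous (bsP G M p z w) := by
  refine Continuous.if_le ?_ ?_ continuous_id continuous_const ?_
  · exact (hG.cont p w).comp_continuous (bsc_cont.comp (by fun_prop)) (fun _ => bsc_mem _)
  · exact (hG.cont z w).comp_continuous (bsc_cont.comp (by fun_prop)) (fun _ => bsc_mem _)
  · intro s hs
    change s = 0 at hs
    subst hs
    rw [bs_c1 h1 m1 le_rfl, bs_c2 h2 m2 le_rfl, hG.one, hG.one]

include hG h1 in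
theorem bsP_neg {s : ℝ} (hs : s ≤ 0) (hs' : -M ≤ s) : bsB p (bsP G M p z w s) w ∧
    (bsP G M p z w s = w ∨ dist p (bsP G M p z w s) = s + M) := by
  rw [bsP, if_pos hs]
  refine ⟨hG.mem _ _ (bsc_mem _), ?_⟩
  rcases le_total 1 ((s + M) / dist p w) with h | h
  · left; rw [bsc_one h, hG.one]
  · right
    rw [hG.dl _ _ (bsc_mem _), bsc_mid (by apply div_nonneg _ h1.le; linarith) h]
    field_simp

include hG h2 in
theorem bsP_pos {s : ℝ} (hs : 0 < s) (hs' : s ≤ M) : bsB z (bsP G M p z w s) w ∧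
    (bsP G M p z w s = w ∨ dist z (bsP G M p z w s) = M - s) := by
  rw [bsP, if_neg (by linarith)]
  refine ⟨hG.mem _ _ (bsc_mem _), ?_⟩
  rcases le_total 1 ((M - s) / dist z w) with h | h
  · left; rw [bsc_one h, hG.one]
  · right
    rw [hG.dl _ _ (bsc_mem _), bsc_mid (by apply div_nonneg _ h2.le; linarith) h]
    field_simp

include hG h1 h2 m1 m2 in
theorem bsP_dl {φ : S → ℂ} (hφ : Continuous φ) (hi : Function.Injective φ) (r : S)
    (b1 : ¬ bsB p r w) (b2 : ¬ bsB z r w) :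
    bsdl (fun s => φ (bsP G M p z w s) - φ r) (-M) M = bsDv φ G r p w - bsDv φ G r z w := by
  obtain ⟨L, cL, eL⟩ := bs_lift1 hG hφ hi r p w b1
  obtain ⟨K, cK, eK⟩ := bs_lift1 hG hφ hi r z w b2
  have i1 : (1:ℝ) ∈ Icc (0:ℝ) 1 := by simp
  have hM : 0 < M := by linarith
  have e1 := eL 1 i1
  have e2 := eK 1 i1
  rw [hG.one] at e1 e2
  rw [bsDv, bsDv, bsdl_eq zero_le_one L cL eL, bsdl_eq zero_le_one K cK eK,
    bsdl_eq (by linarith) (fun s => L (bsc ((s + M) / dist p w)) +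
      K (bsc ((M - s) / dist z w)) - K 1)]
  · rw [bs_c1 h1 m1 hM.le, bs_c2 h2 m2 (s := -M) (by linarith)]
    simp [bsc_zero]
    ring
  · refine Continuous.continuousOn (Continuous.sub (Continuous.add ?_ ?_) continuous_const)
    · exact cL.comp_continuous (bsc_cont.comp (by fun_prop)) (fun _ => bsc_mem _)
    · exact cK.comp_continuous (bsc_cont.comp (by fun_prop)) (fun _ => bsc_mem _)
  · intro s hs
    rcases le_or_gt s 0 with h | h
    · rw [bs_c2 h2 m2 h, add_sub_cancel_right, eL _ (bsc_mem _), bsP, if_pos h]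
    · rw [bs_c1 h1 m1 h.le, bsP, if_neg (by linarith), ← eK _ (bsc_mem _)]
      rw [Complex.exp_sub, Complex.exp_add, e1, e2, mul_comm, mul_div_assoc, div_self, mul_one]
      rw [← e2]; exact Complex.exp_ne_zero _

end bsPath

/-- separation conditions for two middle points -/
structure BsSep {S : Type*} [MetricSpace S] (p z v w : S) : Prop where
  a1 : ¬ bsB p v w
  a2 : ¬ bsB p w v
  a3 : ¬ bsB z v w
  a4 : ¬ bsB z w v
  a5 : ∀ r, bsB p r v → ¬ bsB z r w
  a6 : ∀ r, bsB p r w → ¬ bsB z r v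

theorem bsP_inj {S : Type*} [MetricSpace S] {G : S → S → ℝ → S} (hG : BsG G) {M : ℝ} {p z v w : S}
    (h1 : 0 < dist p w) (h2 : 0 < dist z w) (h3 : 0 < dist p v) (h4 : 0 < dist z v)
    (hs : BsSep p z v w) : ∀ s ∈ Icc (-M) M, ∀ t ∈ Icc (-M) M,
      bsP G M p z v s = bsP G M p z w t → s = t := by
  intro s is t it e
  rcases le_or_gt s 0 with h | h <;> rcases le_or_gt t 0 with h' | h'
  · obtain ⟨b1, c1⟩ := bsP_neg (z := z) hG h3 h is.1
    obtain ⟨b2, c2⟩ := bsP_neg (z := z) hG h1 h' it.1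
    rw [e] at b1 c1
    rcases c1 with c1 | c1
    · rw [c1] at b2; exact absurd b2 hs.a1
    rcases c2 with c2 | c2
    · rw [c2] at b1; exact absurd b1 hs.a2
    linarith
  · obtain ⟨b1, c1⟩ := bsP_neg (z := z) hG h3 h is.1
    obtain ⟨b2, c2⟩ := bsP_pos (p := p) hG h2 h' it.2
    rw [e] at b1
    exact absurd b2 (hs.a5 _ b1)
  · obtain ⟨b1, c1⟩ := bsP_pos (p := p) hG h4 h is.2
    obtain ⟨b2, c2⟩ := bsP_neg (z := z) hG h1 h' it.1
    rw [e] at b1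
    exact absurd b1 (hs.a6 _ b2)
  · obtain ⟨b1, c1⟩ := bsP_pos (p := p) hG h4 h is.2
    obtain ⟨b2, c2⟩ := bsP_pos (p := p) hG h2 h' it.2
    rw [e] at b1 c1
    rcases c1 with c1 | c1
    · rw [c1] at b2; exact absurd b2 hs.a3
    rcases c2 with c2 | c2
    · rw [c2] at b1; exact absurd b1 hs.a4
    linarith

theorem bs_sep_u {S : Type*} [MetricSpace S] {x y z p u : S} (hp : bsB x p y) (hu : bsB p u z)
    (hxy : ¬ bsB x u y) (hxz : ¬ bsB x u z) : BsSep p z x u := by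
  have a2 : ¬ bsB p u x := fun h => hxy (h.symm.t1 hp)
  have a4 : ¬ bsB z u x := fun h => hxz h.symm
  exact ⟨fun h => hxz (h.t2 hu), a2, fun h => hxy ((h.t2 hu.symm).t1 hp), a4,
    fun r h h' => a2 ((h'.t2 hu.symm).symm.t1 h), fun r h h' => a4 ((h.t2 hu).symm.t1 h')⟩

theorem bs_sep_x {S : Type*} [MetricSpace S] {x y z p u : S} (hp : bsB x p y) (hu : bsB p u z)
    (hxz : ¬ bsB x u z) (hyz : ¬ bsB y u z) : BsSep p z x y := by
  have k1 : ¬ bsB y p z := fun h => hyz (hu.symm.t1 h.symm).symm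
  have k2 : ¬ bsB x p z := fun h => hxz (hu.symm.t1 h.symm).symm
  refine ⟨?_, ?_, ?_, ?_, ?_, ?_⟩
  · intro h
    have : p = x := by
      unfold bsB at *
      rw [← dist_eq_zero]
      rw [dist_comm x p] at hp
      linarith [dist_nonneg (x := p) (y := x)]
    subst this; exact hxz hu
  · intro h
    have : p = y := by
      unfold bsB at *
      rw [← dist_eq_zero]
      rw [dist_comm y x] at h
      rw [dist_comm x p] at hp
      linarith [dist_nonneg (x := p) (y := y)]
    subst this; exact hyz hu
  · intro h; exact k1 (hp.symm.t1 h.symm)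
  · intro h; exact k2 (hp.t1 h.symm)
  · intro r h h'
    exact k1 ((h.symm.t2 hp).symm.t1 h'.symm)
  · intro r h h'
    exact k2 ((h.symm.t2 hp.symm).symm.t1 h'.symm)

theorem bs_cone_avoid {S : Type*} [MetricSpace S] {G : S → S → ℝ → S} (hG : BsG G)
    {x y z p u : S} (hp : bsB x p y) (hu : bsB p u z)
    (hxy : ¬ bsB x u y) (hyz : ¬ bsB y u z) :
    (∀ w, bsB p w x → ¬ bsB z y w) ∧ (∀ w, bsB p w u → ¬ bsB z y w) := by
  have k : ¬ bsB p y z := by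
    intro h
    rcases hG.lin hu h with h' | h'
    · exact hxy (h'.1.symm.t1 hp.symm).symm
    · exact hyz h'.2
  constructor
  · intro w h h'
    exact k ((h.symm.t2 hp).t2 h'.symm)
  · intro w h h'
    exact k (h'.t1 (h.t1 hu).symm).symm

theorem bs_peano0 {S : Type*} [MetricSpace S] {G : S → S → ℝ → S} (hG : BsG G)
    {φ : S → ℂ} (hφ : Continuous φ) (hi : Function.Injective φ)
    {x y z p u : S} (hp : bsB x p y) (hu : bsB p u z) : ∃ v, bsB y v z ∧ bsB x u v := by
  by_contra! hno
  have hxy : ¬ bsB x u y := hno y (bsB_left _ _)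
  have hxz : ¬ bsB x u z := hno z (bsB_right _ _)
  have hyz : ¬ bsB y u z := fun h => hno u h (bsB_right _ _)
  have hyx : ¬ bsB y u x := fun h => hxy h.symm
  have sxu := bs_sep_u hp hu hxy hxz
  have syu := bs_sep_u hp.symm hu hyx hyz
  have sxy := bs_sep_x hp hu hxz hyz
  have px : 0 < dist p x := dist_pos.2 (by rintro rfl; exact hxz hu)
  have py : 0 < dist p y := dist_pos.2 (by rintro rfl; exact hyz hu)
  have pu : 0 < dist p u := dist_pos.2 (by rintro rfl; exact hxy hp)
  have zx : 0 < dist z x := dist_pos.2 (by rintro rfl; exact sxu.a2 hu)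
  have zy : 0 < dist z y := dist_pos.2 (by rintro rfl; exact syu.a2 hu)
  have zu : 0 < dist z u := dist_pos.2 (by rintro rfl; exact hxz (bsB_right _ _))
  obtain ⟨M, hM⟩ : ∃ M, M = dist p x + dist p y + dist p u + dist z x + dist z y + dist z u :=
    ⟨_, rfl⟩
  have M1 : dist p x ≤ M := by linarith
  have M2 : dist p y ≤ M := by linarith
  have M3 : dist p u ≤ M := by linarith
  have M4 : dist z x ≤ M := by linarith
  have M5 : dist z y ≤ M := by linarith
  have M6 : dist z u ≤ M := by linarith
  have ne : ∀ {v w : S}, BsSep p z v w → φ v ≠ φ w := fun {v w} h e =>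
    h.a1 (by rw [hi e]; exact bsB_right _ _)
  have inj : ∀ {v w : S}, 0 < dist p w → 0 < dist z w → 0 < dist p v → 0 < dist z v →
      BsSep p z v w → ∀ s ∈ Icc (-M) M, ∀ t ∈ Icc (-M) M,
      φ (bsP G M p z v s) = φ (bsP G M p z w t) → s = t := fun a b c d e s hs t ht h =>
    bsP_inj hG a b c d e s hs t ht (hi h)
  have cy := bs_cone_avoid hG hp hu hxy hyz
  have cx := bs_cone_avoid hG hp.symm hu hyx hxz
  refine bs_theta M (by linarith) (fun s => φ (bsP G M p z x s)) (fun s => φ (bsP G M p z y s))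
    (fun s => φ (bsP G M p z u s)) (φ p) (φ z)
    (hφ.comp (bsP_cont hG px zx M1 M4)).continuousOn
    (hφ.comp (bsP_cont hG py zy M2 M5)).continuousOn
    (hφ.comp (bsP_cont hG pu zu M3 M6)).continuousOn
    (congrArg φ (bsP_start hG px M1)) (congrArg φ (bsP_end hG px M1))
    (congrArg φ (bsP_start hG py M2)) (congrArg φ (bsP_end hG py M2))
    (congrArg φ (bsP_start hG pu M3)) (congrArg φ (bsP_end hG pu M3))
    (inj py zy px zx sxy) (inj pu zu px zx sxu) (inj pu zu py zy syu) ?_ ?_ ?_ ?_ ?_ ?_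
  · simp only [bsP_zero hG px M1, bsP_zero hG py M2]; exact ne sxy
  · simp only [bsP_zero hG px M1, bsP_zero hG pu M3]; exact ne sxu
  · simp only [bsP_zero hG py M2, bsP_zero hG pu M3]; exact ne syu
  · simp only [bsP_zero hG pu M3]
    rw [bsP_dl hG px zx M1 M4 hφ hi u sxu.a2 sxu.a4, bsP_dl hG py zy M2 M5 hφ hi u syu.a2 syu.a4]
    have c1 := bs_cone hG hφ hi u x y z hno
    have c2 := bs_cone hG hφ hi u x p y (fun w h h' => hxy (h'.t1 (h.symm.t1 hp.symm).symm))
    rw [bs_Dv_symm hG hφ hi u p x sxu.a2] at c2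
    rw [bs_Dv_symm hG hφ hi u z x sxu.a4, bs_Dv_symm hG hφ hi u z y syu.a4] at c1
    linear_combination -c1 - c2
  · simp only [bsP_zero hG py M2]
    rw [bsP_dl hG px zx M1 M4 hφ hi y sxy.a2 sxy.a4, bsP_dl hG pu zu M3 M6 hφ hi y syu.a1 syu.a3]
    have c1 := bs_cone hG hφ hi y z p x cy.1
    have c2 := bs_cone hG hφ hi y z p u cy.2
    linear_combination c1 - c2
  · simp only [bsP_zero hG px M1]
    rw [bsP_dl hG py zy M2 M5 hφ hi x sxy.a1 sxy.a3, bsP_dl hG pu zu M3 M6 hφ hi x sxu.a1 sxu.a3]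
    have c1 := bs_cone hG hφ hi x z p y cx.1
    have c2 := bs_cone hG hφ hi x z p u cx.2
    linear_combination c1 - c2

theorem bs_peano {S : Type*} [MetricSpace S] {G : S → S → ℝ → S} (hG : BsG G)
    {φ : S → ℂ} (hφ : Continuous φ) (hi : Function.Injective φ)
    {x y z p q u : S} (hp : bsB x p y) (hq : bsB x q z) (hu : bsB p u q) :
    ∃ v, bsB y v z ∧ bsB x u v := by
  obtain ⟨v1, h1, h2⟩ := bs_peano0 hG hφ hi hq hu.symm
  obtain ⟨v, h3, h4⟩ := bs_peano0 hG hφ hi hp h1.symm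
  exact ⟨v, h3, h2.t1 h4⟩

theorem bs_mem_geo {S : Type*} [MetricSpace S] {γ : ℝ → S} {x y : S} (h : IsGeodesicFromTo γ x y)
    {t : ℝ} (ht : t ∈ Icc 0 (dist x y)) : bsB x (γ t) y := by
  obtain ⟨h, h0, h1⟩ := h
  have a := h 0 (by simp) t ht
  have b := h t ht (dist x y) (by simp)
  rw [h0, abs_of_nonpos (by linarith [ht.1])] at a
  rw [h1, abs_of_nonpos (by linarith [ht.2])] at b
  unfold bsB
  rw [a, b]; ring

theorem bs_geo_mem {S : Type*} [MetricSpace S] (hS : IsBusemannSpace S) {γ : ℝ → S} {x y r : S}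
    (h : IsGeodesicFromTo γ x y) (hr : bsB x r y) : γ (dist x r) = r := by
  classical
  obtain ⟨g, hg, hg0, hg1⟩ := hS.1 x r
  obtain ⟨k, hk, hk0, hk1⟩ := hS.1 r y
  unfold bsB at hr
  have n1 := dist_nonneg (x := x) (y := r)
  have n2 := dist_nonneg (x := r) (y := y)
  let c : ℝ → S := fun t => if t ≤ dist x r then g t else k (t - dist x r)
  have aux : ∀ s ∈ Icc 0 (dist x y), ∀ t ∈ Icc 0 (dist x y), s ≤ t →
      dist (c s) (c t) = t - s := by
    intro s hs t ht hst
    by_cases h1 : t ≤ dist x r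
    · simp only [c, if_pos h1, if_pos (hst.trans h1)]
      rw [hg s ⟨hs.1, by linarith⟩ t ⟨ht.1, h1⟩, abs_of_nonpos (by linarith)]; ring
    · by_cases h2 : s ≤ dist x r
      · simp only [c, if_neg h1, if_pos h2]
        have e1 := hg 0 ⟨le_rfl, n1⟩ s ⟨hs.1, h2⟩
        have e2 := hg s ⟨hs.1, h2⟩ (dist x r) ⟨n1, le_rfl⟩
        have e3 := hk 0 ⟨le_rfl, n2⟩ (t - dist x r) ⟨by linarith, by linarith [ht.2]⟩
        have e4 := hk (t - dist x r) ⟨by linarith, by linarith [ht.2]⟩ (dist r y) ⟨n2, le_rfl⟩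
        rw [hg0, abs_of_nonpos (by linarith [hs.1])] at e1
        rw [hg1, abs_of_nonpos (by linarith [hs.1])] at e2
        rw [hk0, abs_of_nonpos (by linarith [hs.1])] at e3
        rw [hk1, abs_of_nonpos (by linarith [ht.2])] at e4
        apply le_antisymm
        · linarith [dist_triangle (g s) r (k (t - dist x r))]
        · linarith [dist_triangle x (g s) y, dist_triangle (g s) (k (t - dist x r)) y]
      · simp only [c, if_neg h1, if_neg h2]
        rw [hk _ ⟨by linarith, by linarith [hs.2]⟩ _ ⟨by linarith, by linarith [ht.2]⟩,
          abs_of_nonpos (by linarith)]; ring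
  have hc : IsGeodesicOn c 0 (dist x y) := by
    intro s hs t ht
    rcases le_total s t with hst | hst
    · rw [aux s hs t ht hst, abs_of_nonpos (by linarith)]; ring
    · rw [dist_comm, aux t ht s hs hst, abs_of_nonneg (by linarith)]
  have c0 : c 0 = x := by simp only [c, if_pos n1, hg0]
  have cr : c (dist x r) = r := by simp only [c, if_pos le_rfl, hg1]
  have c1 : c (dist x y) = y := by
    by_cases hh : dist x y ≤ dist x r
    · have : r = y := by rw [← dist_eq_zero]; linarith
      subst this; exact cr
    · simp only [c, if_neg hh]
      rw [← hr, add_sub_cancel_left, hk1]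
  obtain ⟨hγ, hγ0, hγ1⟩ := h
  rcases eq_or_ne (dist x y) 0 with hd | hd
  · have e : dist x r = 0 := by linarith
    rw [e, hγ0]; exact dist_eq_zero.1 e
  have hcv := hS.2 γ c 0 (dist x y) 0 (dist x y) dist_nonneg dist_nonneg hγ hc
  have hdp : 0 < dist x y := lt_of_le_of_ne dist_nonneg hd.symm
  have t0 : 0 ≤ dist x r / dist x y := by positivity
  have t1 : dist x r / dist x y ≤ 1 := by rw [div_le_one hdp]; linarith
  have hcv2 := hcv.2
  have := hcv2 (left_mem_Icc.2 zero_le_one) (right_mem_Icc.2 zero_le_one)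
    (sub_nonneg.2 t1) t0 (by ring)
  simp only [smul_eq_mul, mul_zero, mul_one, zero_add, sub_zero, one_mul, sub_self,
    zero_mul, hγ0, hγ1, c0, c1, dist_self] at this
  rw [div_mul_cancel₀ _ hd, cr] at this
  exact dist_le_zero.1 this

/-- Peano axiom: if `p ∈ [x,y]`, `q ∈ [x,z]` and `u ∈ [p,q]`, then there is
`v ∈ [y,z]` with `u ∈ [x,v]`. -/
theorem busemann_surface_peano {S : Type*} [MetricSpace S]
    (hS : IsBusemannSurface S)
    (seg : S → S → Set S) (hseg : ∀ x y : S, IsGeodesicSegment x y (seg x y))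
    (x y z p q u : S) (hp : p ∈ seg x y) (hq : q ∈ seg x z) (hu : u ∈ seg p q) :
    ∃ v ∈ seg y z, u ∈ seg x v := by
  obtain ⟨hB, ⟨e⟩⟩ := hS
  have hmem : ∀ a b r, r ∈ seg a b ↔ bsB a r b := by
    intro a b r
    obtain ⟨γ, hγ, hs⟩ := hseg a b
    rw [hs]
    constructor
    · rintro ⟨t, ht, rfl⟩
      exact bs_mem_geo hγ ht
    · intro h
      refine ⟨dist a r, ⟨dist_nonneg, ?_⟩, bs_geo_mem hB hγ h⟩
      unfold bsB at h
      linarith [dist_nonneg (x := r) (y := b)]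
  choose g hg using hB.1
  have hG : BsG (fun a b t => g a b (t * dist a b)) := by
    have hm : ∀ a b : S, ∀ t ∈ Icc (0:ℝ) 1, t * dist a b ∈ Icc 0 (dist a b) := fun a b t ht =>
      ⟨mul_nonneg ht.1 dist_nonneg, mul_le_of_le_one_left dist_nonneg ht.2⟩
    refine ⟨?_, ?_, ?_, ?_, ?_⟩
    · intro a b; simp [(hg a b).2.1]
    · intro a b; simp [(hg a b).2.2]
    · intro a b s hs t ht
      rw [(hg a b).1 _ (hm a b s hs) _ (hm a b t ht), ← sub_mul, abs_mul,
        abs_of_nonneg (dist_nonneg (x := a) (y := b))]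
    · intro a b b' t ht
      have hcv := hB.2 (g a b) (g a b') 0 (dist a b) 0 (dist a b') dist_nonneg dist_nonneg
        (hg a b).1 (hg a b').1
      have hcv2 := hcv.2
      have := hcv2 (left_mem_Icc.2 zero_le_one) (right_mem_Icc.2 zero_le_one)
        (sub_nonneg.2 ht.2) ht.1 (by ring)
      simpa [(hg a b).2.1, (hg a b).2.2, (hg a b').2.1, (hg a b').2.2] using this
    · intro a r b h
      have e1 := bs_geo_mem hB (hg a b) h
      unfold bsB at h
      rcases eq_or_ne (dist a b) 0 with hd | hd
      · refine ⟨0, by simp, ?_⟩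
        have : dist a r = 0 := by
          linarith [dist_nonneg (x := a) (y := r), dist_nonneg (x := r) (y := b)]
        rw [this] at e1
        simpa using e1
      · have hdp : 0 < dist a b := lt_of_le_of_ne dist_nonneg hd.symm
        refine ⟨dist a r / dist a b, ⟨by positivity, ?_⟩, ?_⟩
        · rw [div_le_one hdp]; linarith [dist_nonneg (x := r) (y := b)]
        · simp only [div_mul_cancel₀ _ hd, e1]
  let φ : S → ℂ := fun s => Complex.equivRealProdCLM.symm (e s)
  have hφ : Continuous φ := Complex.equivRealProdCLM.symm.continuous.comp e.continuous
  have hi : Function.Injective φ := Complex.equivRealProdCLM.symm.injective.comp e.injective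
  rw [hmem] at hp hq hu
  obtain ⟨v, h1, h2⟩ := bs_peano hG hφ hi hp hq hu
  exact ⟨v, (hmem _ _ _).2 h1, (hmem _ _ _).2 h2⟩
end

section
/- A Busemann surface (S,d) is join-hull commutative: for any nonempty convex set A ⊆ S and any point p ∈ S with p ∉ A, conv({p} ∪ A) = ⋃ { [p,x] : x ∈ A }. -/
open Metric Set MeasureTheory

section BusemannAux

/-- Variation of the logarithm of `f` from `0` to `1`. -/
noncomputable def wv (f : ℝ → ℂ) : ℂ :=
  open Classical in
  if h : ∃ L : ℝ → ℂ, Continuous L ∧ ∀ t, Complex.exp (L t) = f t then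
    h.choose 1 - h.choose 0 else 0

theorem wv_eq {f L : ℝ → ℂ} (hL : Continuous L) (h : ∀ t, Complex.exp (L t) = f t) :
    wv f = L 1 - L 0 := by
  have hex : ∃ L : ℝ → ℂ, Continuous L ∧ ∀ t, Complex.exp (L t) = f t := ⟨L, hL, h⟩
  rw [wv, dif_pos hex]
  obtain ⟨h1, h2⟩ := hex.choose_spec
  set M := hex.choose
  have key : (fun t => M t + (L 0 - M 0)) = L := by
    refine Complex.isCoveringMap_exp.eq_of_comp_eq (h1.add continuous_const) hL ?_ 0 (by simp)
    funext t
    apply Subtype.ext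
    simp only [Function.comp]
    rw [Complex.exp_add, Complex.exp_sub, h, h2, h, h2, div_self, mul_one]
    rw [← h]; exact Complex.exp_ne_zero _
  have := congrFun key 1
  rw [← this]; ring

theorem exists_log2 (G : ℝ × ℝ → ℂ) (hG : Continuous G) (h0 : ∀ z, G z ≠ 0) :
    ∃ L : ℝ × ℝ → ℂ, Continuous L ∧ ∀ z, Complex.exp (L z) = G z := by
  obtain ⟨F, ⟨-, hF⟩, -⟩ := Complex.isCoveringMapOn_exp.existsUnique_continuousMap_lifts
    (⟨G, hG⟩ : C(ℝ × ℝ, ℂ)) (a₀ := 0) (e₀ := Complex.log (G 0)) (Complex.exp_log (h0 0))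
    (fun a => h0 a)
  exact ⟨F, F.continuous, fun z => congrFun hF z⟩

theorem wv_comp {G L : ℝ × ℝ → ℂ} (hL : Continuous L) (h : ∀ z, Complex.exp (L z) = G z)
    (c : ℝ → ℝ × ℝ) (hc : Continuous c) {f : ℝ → ℂ} (hf : ∀ t, f t = G (c t)) :
    wv f = L (c 1) - L (c 0) :=
  wv_eq (L := fun t => L (c t)) (hL.comp hc) (fun t => by rw [h, hf])

theorem wv_neg_comp {G L : ℝ × ℝ → ℂ} (hL : Continuous L) (h : ∀ z, Complex.exp (L z) = G z)
    (c : ℝ → ℝ × ℝ) (hc : Continuous c) {f : ℝ → ℂ} (hf : ∀ t, f t = - G (c t)) :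
    wv f = L (c 1) - L (c 0) := by
  rw [wv_eq (f := f) (L := fun t => L (c t) + Real.pi * Complex.I) ((hL.comp hc).add continuous_const)]
  · ring
  · intro t
    rw [Complex.exp_add, h, hf, Complex.exp_pi_mul_I]; ring

theorem exp_wv {f : ℝ → ℂ} (hf : Continuous f) (h0 : ∀ t, f t ≠ 0) :
    Complex.exp (wv f) = f 1 / f 0 := by
  obtain ⟨L, hL, h⟩ := exists_log2 (fun z => f z.1) (by fun_prop) (fun z => h0 _)
  rw [wv_comp hL h (fun t => (t, 0)) (by fun_prop) (fun t => rfl), Complex.exp_sub, h, h]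

variable {S : Type*} [MetricSpace S]

/-- Metric betweenness. -/
def Mbt (x w y : S) : Prop := dist x w + dist w y = dist x y

/-- Clamp to the unit interval. -/
noncomputable def clp (t : ℝ) : ℝ := max 0 (min t 1)

theorem clp_mem (t : ℝ) : clp t ∈ Icc (0 : ℝ) 1 := by
  unfold clp; constructor
  · exact le_max_left _ _
  · exact max_le zero_le_one (min_le_right _ _)

theorem clp_of_mem {t : ℝ} (h : t ∈ Icc (0 : ℝ) 1) : clp t = t := by
  unfold clp; rw [min_eq_left h.2, max_eq_right h.1]

theorem clp_clp (t : ℝ) : clp (clp t) = clp t := clp_of_mem (clp_mem t)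

theorem continuous_clp : Continuous clp := by unfold clp; fun_prop

variable (hB : IsBusemannSpace S)

/-- The affinely parametrized geodesic from `x` to `y`. -/
noncomputable def gp (x y : S) (t : ℝ) : S := (hB.1 x y).choose (clp t * dist x y)

theorem gp_clp (x y : S) (t : ℝ) : gp hB x y (clp t) = gp hB x y t := by
  unfold gp; rw [clp_clp]

theorem gp_zero (x y : S) : gp hB x y 0 = x := by
  have := (hB.1 x y).choose_spec.2.1
  unfold gp; rw [clp_of_mem (by simp), zero_mul, this]

theorem gp_one (x y : S) : gp hB x y 1 = y := by
  have := (hB.1 x y).choose_spec.2.2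
  unfold gp; rw [clp_of_mem (by simp), one_mul, this]

theorem gp_dist (x y : S) {s t : ℝ} (hs : s ∈ Icc (0 : ℝ) 1) (ht : t ∈ Icc (0 : ℝ) 1) :
    dist (gp hB x y s) (gp hB x y t) = |s - t| * dist x y := by
  have h := (hB.1 x y).choose_spec.1
  unfold gp
  rw [clp_of_mem hs, clp_of_mem ht]
  have hd : 0 ≤ dist x y := dist_nonneg
  rw [h _ ⟨mul_nonneg hs.1 hd, mul_le_of_le_one_left hd hs.2⟩ _
    ⟨mul_nonneg ht.1 hd, mul_le_of_le_one_left hd ht.2⟩, ← sub_mul, abs_mul, abs_of_nonneg hd]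

theorem gp_dist_left (x y : S) {t : ℝ} (ht : t ∈ Icc (0 : ℝ) 1) :
    dist x (gp hB x y t) = t * dist x y := by
  have := gp_dist hB x y (s := 0) (by simp) ht
  rwa [gp_zero, zero_sub, abs_neg, abs_of_nonneg ht.1] at this

theorem gp_dist_right (x y : S) {t : ℝ} (ht : t ∈ Icc (0 : ℝ) 1) :
    dist (gp hB x y t) y = (1 - t) * dist x y := by
  have := gp_dist hB x y (t := 1) ht (by simp)
  rwa [gp_one, abs_sub_comm, abs_of_nonneg (by linarith [ht.2])] at this

theorem gp_btw (x y : S) (t : ℝ) : Mbt x (gp hB x y t) y := by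
  rw [← gp_clp, Mbt, gp_dist_left hB _ _ (clp_mem t), gp_dist_right hB _ _ (clp_mem t)]
  ring

theorem geod_concat {γ₁ γ₂ : ℝ → S} {x w y : S} (h₁ : IsGeodesicFromTo γ₁ x w)
    (h₂ : IsGeodesicFromTo γ₂ w y) (h : Mbt x w y) :
    IsGeodesicFromTo (fun r => if r ≤ dist x w then γ₁ r else γ₂ (r - dist x w)) x y := by
  obtain ⟨g1, a1, b1⟩ := h₁
  obtain ⟨g2, a2, b2⟩ := h₂
  unfold Mbt at h
  have d1 : 0 ≤ dist x w := dist_nonneg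
  have d2 : 0 ≤ dist w y := dist_nonneg
  have mixed : ∀ s ∈ Icc 0 (dist x y), ∀ t ∈ Icc 0 (dist x y), s ≤ dist x w → dist x w < t →
      dist (γ₁ s) (γ₂ (t - dist x w)) = t - s := by
    intro s hs t ht hsd htd
    have e1 := g1 s ⟨hs.1, hsd⟩ (dist x w) ⟨d1, le_rfl⟩
    have e0 := g1 0 ⟨le_rfl, d1⟩ s ⟨hs.1, hsd⟩
    have e2 := g2 0 ⟨le_rfl, d2⟩ (t - dist x w) ⟨by linarith, by linarith [ht.2]⟩
    have e3 := g2 (t - dist x w) ⟨by linarith, by linarith [ht.2]⟩ (dist w y) ⟨d2, le_rfl⟩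
    rw [b1, abs_sub_comm, abs_of_nonneg (by linarith)] at e1
    rw [a1, abs_sub_comm, abs_of_nonneg (by linarith [hs.1])] at e0
    rw [a2, abs_sub_comm, abs_of_nonneg (by linarith)] at e2
    rw [b2, abs_sub_comm, abs_of_nonneg (by linarith [ht.2])] at e3
    have t1 := dist_triangle (γ₁ s) w (γ₂ (t - dist x w))
    have t2 := dist_triangle x (γ₁ s) (γ₂ (t - dist x w))
    have t3 := dist_triangle x (γ₂ (t - dist x w)) y
    linarith
  refine ⟨?_, ?_, ?_⟩
  · intro s hs t ht
    by_cases hsd : s ≤ dist x w <;> by_cases htd : t ≤ dist x w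
    · simp only [hsd, htd, if_true]
      exact g1 s ⟨hs.1, hsd⟩ t ⟨ht.1, htd⟩
    · simp only [hsd, htd, if_true, if_false]
      rw [mixed s hs t ht hsd (not_le.1 htd), abs_sub_comm, abs_of_nonneg (by linarith)]
    · simp only [hsd, htd, if_true, if_false]
      rw [dist_comm, mixed t ht s hs htd (not_le.1 hsd), abs_of_nonneg (by linarith)]
    · simp only [hsd, htd, if_false]
      push Not at hsd htd
      rw [g2 _ ⟨by linarith, by linarith [hs.2]⟩ _ ⟨by linarith, by linarith [ht.2]⟩]
      congr 1; ring
  · simp only [d1, if_true, a1]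
  · by_cases hd : dist x y ≤ dist x w
    · have : dist w y = 0 := by linarith
      have e := dist_eq_zero.1 this
      subst e
      simp [b1]
    · simp only [hd, if_false]
      rw [← h, add_sub_cancel_left, b2]

include hB in
theorem geod_unique {γ γ' : ℝ → S} {x y : S} (h : IsGeodesicFromTo γ x y)
    (h' : IsGeodesicFromTo γ' x y) {t : ℝ} (ht : t ∈ Icc (0 : ℝ) 1) :
    γ (t * dist x y) = γ' (t * dist x y) := by
  have c := hB.2 γ γ' 0 (dist x y) 0 (dist x y) dist_nonneg dist_nonneg h.1 h'.1
  have := c.2 (left_mem_Icc.2 zero_le_one) (right_mem_Icc.2 zero_le_one)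
    (sub_nonneg.2 ht.2) ht.1 (sub_add_cancel 1 t)
  simp [h.2.1, h.2.2, h'.2.1, h'.2.2] at this
  exact this

theorem gp_unique {x y w : S} {t : ℝ} (ht : t ∈ Icc (0 : ℝ) 1) (h1 : dist x w = t * dist x y)
    (h2 : dist w y = (1 - t) * dist x y) : w = gp hB x y t := by
  have hb : Mbt x w y := by unfold Mbt; rw [h1, h2]; ring
  have s1 := (hB.1 x w).choose_spec
  have c := geod_concat s1 (hB.1 w y).choose_spec hb
  have := geod_unique hB (hB.1 x y).choose_spec c ht
  unfold gp
  rw [clp_of_mem ht, this]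
  simp only [← h1, le_refl, if_true]
  exact s1.2.2.symm

theorem gp_convex (x y x' y' : S) {t : ℝ} (ht : t ∈ Icc (0 : ℝ) 1) :
    dist (gp hB x y t) (gp hB x' y' t) ≤ (1 - t) * dist x x' + t * dist y y' := by
  have h := (hB.1 x y).choose_spec
  have h' := (hB.1 x' y').choose_spec
  have c := hB.2 _ _ 0 (dist x y) 0 (dist x' y') dist_nonneg dist_nonneg h.1 h'.1
  have := c.2 (left_mem_Icc.2 zero_le_one) (right_mem_Icc.2 zero_le_one)
    (sub_nonneg.2 ht.2) ht.1 (sub_add_cancel 1 t)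
  simp [h.2.1, h.2.2, h'.2.1, h'.2.2] at this
  unfold gp
  rw [clp_of_mem ht]
  exact this

theorem gp_self (x : S) (t : ℝ) : gp hB x x t = x := by
  have := gp_btw hB x x t
  unfold Mbt at this
  rw [dist_self] at this
  have h1 : 0 ≤ dist x (gp hB x x t) := dist_nonneg
  have h2 : 0 ≤ dist (gp hB x x t) x := dist_nonneg
  exact dist_eq_zero.1 (by linarith)

theorem continuous_gp (c : S) : Continuous (fun z : S × ℝ => gp hB c z.1 z.2) := by
  rw [continuous_iff_continuousAt]
  rintro ⟨z, t⟩
  rw [ContinuousAt, tendsto_iff_dist_tendsto_zero]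
  refine squeeze_zero (g := fun w : S × ℝ => dist w.1 z + |clp w.2 - clp t| * dist c z)
    (fun _ => dist_nonneg) ?_ ?_
  · rintro ⟨w, s⟩
    have h1 := gp_convex hB c w c z (clp_mem s)
    have h2 := gp_dist hB c z (clp_mem s) (clp_mem t)
    simp only [gp_clp, dist_self] at h1 h2
    have h3 := dist_triangle (gp hB c w s) (gp hB c z s) (gp hB c z t)
    have h4 : clp s * dist w z ≤ dist w z := mul_le_of_le_one_left dist_nonneg (clp_mem s).2
    simp only
    linarith
  · have : Continuous (fun w : S × ℝ => dist w.1 z + |clp w.2 - clp t| * dist c z) := by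
      have := continuous_clp
      fun_prop
    have h := this.tendsto (z, t)
    simpa using h

theorem continuous_gp' {X : Type*} [TopologicalSpace X] (c : S) {f : X → S} {g : X → ℝ}
    (hf : Continuous f) (hg : Continuous g) : Continuous (fun z => gp hB c (f z) (g z)) :=
  (continuous_gp hB c).comp (hf.prodMk hg)

theorem Mbt.exists_gp {x w y : S} (h : Mbt x w y) :
    ∃ t ∈ Icc (0 : ℝ) 1, w = gp hB x y t := by
  unfold Mbt at h
  rcases eq_or_ne x y with rfl | hne
  · refine ⟨0, by simp, ?_⟩
    rw [gp_zero]
    rw [dist_self] at h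
    have h2 : 0 ≤ dist w x := dist_nonneg
    have h1 : 0 ≤ dist x w := dist_nonneg
    exact (dist_eq_zero.1 (by linarith))
  · have hd : 0 < dist x y := dist_pos.2 hne
    have h2 : 0 ≤ dist w y := dist_nonneg
    have e : dist x w / dist x y * dist x y = dist x w := div_mul_cancel₀ _ hd.ne'
    have hm : dist x w / dist x y ∈ Icc (0 : ℝ) 1 :=
      ⟨by positivity, by rw [div_le_one hd]; linarith⟩
    exact ⟨_, hm, gp_unique hB hm e.symm (by rw [sub_mul, e]; linarith)⟩

theorem gp_sub (x y : S) {s t : ℝ} (hs : s ∈ Icc (0 : ℝ) 1) (ht : t ∈ Icc (0 : ℝ) 1) (r : ℝ) :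
    gp hB (gp hB x y s) (gp hB x y t) r = gp hB x y (s + clp r * (t - s)) := by
  rw [← gp_clp hB _ _ r]
  obtain ⟨hr0, hr1⟩ := clp_mem r
  set q := clp r
  have hm : s + q * (t - s) ∈ Icc (0 : ℝ) 1 := by
    constructor
    · nlinarith [hs.1, ht.1, mul_nonneg hr0 ht.1, mul_nonneg (sub_nonneg.2 hr1) hs.1]
    · nlinarith [hs.2, ht.2, mul_nonneg hr0 (sub_nonneg.2 ht.2),
        mul_nonneg (sub_nonneg.2 hr1) (sub_nonneg.2 hs.2)]
  symm
  apply gp_unique hB ⟨hr0, hr1⟩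
  · rw [gp_dist hB _ _ hs hm, gp_dist hB _ _ hs ht, ← mul_assoc]
    congr 1
    rw [show s - (s + q * (t - s)) = q * (s - t) by ring, abs_mul, abs_of_nonneg hr0]
  · rw [gp_dist hB _ _ hm ht, gp_dist hB _ _ hs ht, ← mul_assoc]
    congr 1
    rw [show s + q * (t - s) - t = (1 - q) * (s - t) by ring, abs_mul,
      abs_of_nonneg (sub_nonneg.2 hr1)]

-- betweenness
theorem Mbt.symm {x w y : S} (h : Mbt x w y) : Mbt y w x := by
  unfold Mbt at *; rw [dist_comm y w, dist_comm w x, dist_comm y x]; linarith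

theorem btw_left (x y : S) : Mbt x x y := by simp [Mbt]
theorem btw_right (x y : S) : Mbt x y y := by simp [Mbt]

/-- `x w y`, `x v w` gives `x v y`. -/
theorem Mbt.tr1 {x w y v : S} (h : Mbt x w y) (h' : Mbt x v w) : Mbt x v y := by
  unfold Mbt at *; linarith [dist_triangle v w y, dist_triangle x v y]
/-- `x w y`, `x v w` gives `v w y`. -/
theorem Mbt.tr2 {x w y v : S} (h : Mbt x w y) (h' : Mbt x v w) : Mbt v w y := by
  unfold Mbt at *; linarith [dist_triangle v w y, dist_triangle x v y]

theorem Mbt.eq_of {x y w : S} (h : Mbt x w y) (h' : Mbt x y w) : w = y := by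
  unfold Mbt at *
  have e := dist_comm w y
  have : 0 ≤ dist w y := dist_nonneg
  exact dist_eq_zero.1 (by linarith)

include hB in
theorem Mbt.total {x y v w : S} (hv : Mbt x v y) (hw : Mbt x w y) : Mbt x v w ∨ Mbt x w v := by
  obtain ⟨s, hs, rfl⟩ := hv.exists_gp hB
  obtain ⟨t, ht, rfl⟩ := hw.exists_gp hB
  unfold Mbt
  rw [dist_comm (gp hB x y t) (gp hB x y s), gp_dist hB x y hs ht, gp_dist_left hB _ _ hs, gp_dist_left hB _ _ ht]
  rcases le_total s t with h | h
  · left; rw [abs_sub_comm, abs_of_nonneg (by linarith)]; ring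
  · right; rw [abs_of_nonneg (by linarith)]; ring

include hB in
/-- Gluing of overlapping geodesics. -/
theorem Mbt.glue {a x m z : S} (h : Mbt a x m) (h' : Mbt x m z) (hne : x ≠ m) : Mbt a x z := by
  obtain ⟨t, ht, rfl⟩ := h'.exists_gp hB
  have c := gp_convex hB a a x z ht
  rw [gp_self] at c
  have e := gp_dist_left hB x z ht
  unfold Mbt at h ⊢
  rw [e] at h
  have htp : 0 < t := by
    rcases ht.1.lt_or_eq with h | h
    · exact h
    · exact absurd (by rw [← h, gp_zero]) hne
  have h1 : t * (dist a x + dist x z) ≤ t * dist a z := by nlinarith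
  have h2 := le_of_mul_le_mul_left h1 htp
  linarith [dist_triangle a x z]

variable (E : S → ℂ)

/-- Log variation of `E · - E x` along `[y, z]`. -/
noncomputable def Va (x y z : S) : ℂ := wv (fun t => E (gp hB y z t) - E x)

variable {E} (hE : Continuous E) (hi : Function.Injective E)

include hE hi

theorem Va_sub {x y z : S} (hx : ¬ Mbt y x z) :
    ∃ L : ℝ → ℂ, ∀ s ∈ Icc (0 : ℝ) 1, ∀ t ∈ Icc (0 : ℝ) 1,
      Va hB E x (gp hB y z s) (gp hB y z t) = L t - L s := by
  obtain ⟨L, hL, h⟩ := exists_log2 (fun w => E (gp hB y z w.1) - E x)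
    ((hE.comp (continuous_gp' hB y continuous_const continuous_fst)).sub continuous_const)
    (fun w h0 => hx (hi (sub_eq_zero.1 h0) ▸ gp_btw hB y z w.1))
  refine ⟨fun t => L (t, 0), fun s hs t ht => ?_⟩
  have := continuous_clp
  rw [Va, wv_comp hL h (fun r => (s + clp r * (t - s), 0)) (by fun_prop)
    (fun r => by rw [gp_sub hB y z hs ht])]
  rw [clp_of_mem (by simp), clp_of_mem (by simp)]
  simp

theorem Va_add {x y w z : S} (hx : ¬ Mbt y x z) (hw : Mbt y w z) :
    Va hB E x y z = Va hB E x y w + Va hB E x w z := by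
  obtain ⟨L, h⟩ := Va_sub hB hE hi hx
  obtain ⟨t, ht, rfl⟩ := hw.exists_gp hB
  have h1 := h 0 (by simp) t ht
  have h2 := h t ht 1 (by simp)
  have h3 := h 0 (by simp) 1 (by simp)
  rw [gp_zero] at h1 h3
  rw [gp_one] at h2 h3
  rw [h1, h2, h3]; ring

theorem Va_symm {x y z : S} (hx : ¬ Mbt y x z) : Va hB E x z y = - Va hB E x y z := by
  obtain ⟨L, h⟩ := Va_sub hB hE hi hx
  have h1 := h 1 (by simp) 0 (by simp)
  have h3 := h 0 (by simp) 1 (by simp)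
  rw [gp_zero, gp_one] at h1 h3
  rw [h1, h3]; ring

theorem Va_cone {x c y z : S} (hx : ∀ w, Mbt y w z → ¬ Mbt c x w) :
    Va hB E x c y + Va hB E x y z = Va hB E x c z := by
  obtain ⟨L, hL, h⟩ := exists_log2 (fun w => E (gp hB c (gp hB y z w.1) w.2) - E x)
    ((hE.comp (continuous_gp' hB c (continuous_gp' hB y continuous_const continuous_fst)
      continuous_snd)).sub continuous_const)
    (fun w h0 => hx _ (gp_btw hB y z w.1) (hi (sub_eq_zero.1 h0) ▸ gp_btw hB c _ w.2))
  have e1 : Va hB E x c y = L (0, 1) - L (0, 0) := wv_comp hL h (fun r => (0, r)) (by fun_prop)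
    (fun r => by rw [gp_zero])
  have e2 : Va hB E x c z = L (1, 1) - L (1, 0) := wv_comp hL h (fun r => (1, r)) (by fun_prop)
    (fun r => by rw [gp_one])
  have e3 : Va hB E x y z = L (1, 1) - L (0, 1) := wv_comp hL h (fun r => (r, 1)) (by fun_prop)
    (fun r => by simp only [gp_one])
  have e4 : wv (fun _ => E c - E x) = L (1, 0) - L (0, 0) :=
    wv_comp hL h (fun r => (r, 0)) (by fun_prop) (fun r => by simp only [gp_zero])
  have e5 : wv (fun _ => E c - E x) = L (0, 0) - L (0, 0) :=
    wv_comp hL h (fun r => (0, 0)) (by fun_prop) (fun r => by simp only [gp_zero])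
  rw [e1, e2, e3]
  linear_combination e5 - e4

theorem Va_sq {y z y' z' : S} (hx : ∀ w, Mbt y w z → ¬ Mbt y' w z') :
    Va hB E y y' z' + Va hB E z' y z = Va hB E y' y z + Va hB E z y' z' := by
  obtain ⟨L, hL, h⟩ := exists_log2 (fun w => E (gp hB y' z' w.2) - E (gp hB y z w.1))
    ((hE.comp (continuous_gp' hB y' continuous_const continuous_snd)).sub
      (hE.comp (continuous_gp' hB y continuous_const continuous_fst)))
    (fun w h0 => hx _ (gp_btw hB y z w.1) (hi (sub_eq_zero.1 h0) ▸ gp_btw hB y' z' w.2))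
  have e1 : Va hB E y y' z' = L (0, 1) - L (0, 0) := wv_comp hL h (fun r => (0, r)) (by fun_prop)
    (fun r => by rw [gp_zero])
  have e2 : Va hB E z y' z' = L (1, 1) - L (1, 0) := wv_comp hL h (fun r => (1, r)) (by fun_prop)
    (fun r => by rw [gp_one])
  have e3 : Va hB E y' y z = L (1, 0) - L (0, 0) :=
    wv_neg_comp hL h (fun r => (r, 0)) (by fun_prop) (fun r => by simp only [gp_zero]; ring)
  have e4 : Va hB E z' y z = L (1, 1) - L (0, 1) :=
    wv_neg_comp hL h (fun r => (r, 1)) (by fun_prop) (fun r => by simp only [gp_one]; ring)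
  rw [e1, e2, e3, e4]; ring

theorem exp_Va {x y z : S} (hx : ¬ Mbt y x z) :
    Complex.exp (Va hB E x y z) = (E z - E x) / (E y - E x) := by
  rw [Va, exp_wv (f := fun t => E (gp hB y z t) - E x) ((hE.comp (continuous_gp' hB y continuous_const continuous_id)).sub continuous_const)
    (fun w h0 => hx (hi (sub_eq_zero.1 h0) ▸ gp_btw hB y z w)), gp_zero, gp_one]

theorem Va_tri {a b c : S} (ha : ¬ Mbt b a c) (hb : ¬ Mbt c b a) (hc : ¬ Mbt a c b) :
    Va hB E a b c + Va hB E b c a + Va hB E c a b ≠ 0 := by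
  intro h0
  have h : Complex.exp (Va hB E a b c + Va hB E b c a + Va hB E c a b) = -1 := by
    rw [Complex.exp_add, Complex.exp_add, exp_Va hB hE hi ha, exp_Va hB hE hi hb, exp_Va hB hE hi hc]
    have h1 : E a - E b ≠ 0 := fun h => ha (hi (sub_eq_zero.1 h) ▸ btw_left _ _)
    have h2 : E b - E c ≠ 0 := fun h => hb (hi (sub_eq_zero.1 h) ▸ btw_left _ _)
    have h3 : E c - E a ≠ 0 := fun h => hc (hi (sub_eq_zero.1 h) ▸ btw_left _ _)
    have h1' : E b - E a ≠ 0 := by rw [← neg_sub]; exact neg_ne_zero.2 h1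
    have h2' : E c - E b ≠ 0 := by rw [← neg_sub]; exact neg_ne_zero.2 h2
    have h3' : E a - E c ≠ 0 := by rw [← neg_sub]; exact neg_ne_zero.2 h3
    field_simp
    ring
  rw [h0, Complex.exp_zero] at h
  norm_num at h

omit hE hi in
theorem Mbt.ext' {a x m s : S} (h : Mbt a x m) (h' : Mbt x s m) : Mbt a x s :=
  (h.symm.tr2 h'.symm).symm

include hB in
theorem lemB {a x m₁ m₂ s : S} (h1 : Mbt a x m₁) (h2 : Mbt a x m₂) (hs : Mbt m₁ s m₂) :
    Mbt a x s := by
  by_contra hx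
  have hxa : x ≠ a := by rintro rfl; exact hx (btw_left _ _)
  have f0 : ¬ Mbt m₁ x m₂ := by
    intro h
    rcases Mbt.total hB hs h with h' | h'
    · exact hx (h1.ext' h'.symm)
    · exact hx (h2.ext' (hs.tr2 h'))
  have hs1 : ¬ Mbt m₁ s x := fun h => hx (h1.ext' h.symm)
  have hs2 : ¬ Mbt m₂ s x := fun h => hx (h2.ext' h.symm)
  have f1 : ∀ w, Mbt a w s → ¬ Mbt x w m₁ := fun w ha hw => hx (ha.tr1 (h1.ext' hw))
  have f2 : ∀ w, Mbt a w s → ¬ Mbt x w m₂ := fun w ha hw => hx (ha.tr1 (h2.ext' hw))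
  have f3 : ∀ w, Mbt m₁ w m₂ → ¬ Mbt x a w := fun w hw ha =>
    f0 (hw.tr1 (Mbt.glue hB h1.symm ha hxa))
  have f4 : ∀ w, Mbt a w x → ¬ Mbt m₁ w m₂ := fun w ha hw => f0 (hw.tr1 (h1.tr2 ha).symm)
  have f5 : ∀ w, Mbt a w x → ¬ Mbt s m₂ w := by
    intro w ha hw
    have hne : s ≠ m₂ := by rintro rfl; exact hx h2
    rcases Mbt.total hB (Mbt.glue hB hs hw hne) (h1.tr2 ha).symm with h | h
    · exact hs1 h
    · exact f0 (hs.tr1 h)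
  have f5' : ∀ w, Mbt a w x → ¬ Mbt s m₁ w := by
    intro w ha hw
    have hne : s ≠ m₁ := by rintro rfl; exact hx h1
    rcases Mbt.total hB (Mbt.glue hB hs.symm hw hne) (h2.tr2 ha).symm with h | h
    · exact hs2 h
    · exact f0 (hs.symm.tr1 h).symm
  have o1 : ∀ w, Mbt s w m₂ → Mbt m₁ s w := fun w hw => hs.ext' hw
  have o2 : ∀ w, Mbt s w m₁ → Mbt m₂ s w := fun w hw => hs.symm.ext' hw
  have f6 : ∀ w, Mbt s w m₂ → ¬ Mbt x w m₁ := fun w hw h => hs1 (h.symm.tr1 (o1 w hw))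
  have f6' : ∀ w, Mbt s w m₁ → ¬ Mbt x w m₂ := fun w hw h => hs2 (h.symm.tr1 (o2 w hw))
  have f7 : ∀ w, Mbt s w m₂ → ¬ Mbt x m₁ w := by
    intro w hw h
    have hne : x ≠ m₁ := by rintro rfl; exact f0 (btw_left _ _)
    exact hx ((Mbt.glue hB h1 h hne).ext' (h.symm.tr1 (o1 w hw).symm).symm)
  have f7' : ∀ w, Mbt s w m₁ → ¬ Mbt x m₂ w := by
    intro w hw h
    have hne : x ≠ m₂ := by rintro rfl; exact f0 (btw_right _ _)
    exact hx ((Mbt.glue hB h2 h hne).ext' (h.symm.tr1 (o2 w hw).symm).symm)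
  have n1 : ¬ Mbt m₂ m₁ x := fun h => f7 _ (btw_right _ _) h.symm
  have n2 : ¬ Mbt x m₂ m₁ := f7' _ (btw_right _ _)
  apply Va_tri hB hE hi f0 n1 n2
  have e1 := Va_sq hB hE hi f1
  have e2 := Va_sq hB hE hi f2
  have e3 := Va_cone hB hE hi f3
  have e4 := Va_sq hB hE hi f4
  have e5 := Va_cone hB hE hi f5
  have e5' := Va_cone hB hE hi f5'
  have e6 := Va_sq hB hE hi f6
  have e6' := Va_sq hB hE hi f6'
  have e7 := Va_cone hB hE hi f7
  have e7' := Va_cone hB hE hi f7'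
  have e8 := Va_add hB hE hi f0 hs
  have s1 := Va_symm hB hE hi (fun h => f1 _ h (btw_right _ _) : ¬ Mbt a m₁ s)
  have s2 := Va_symm hB hE hi (fun h => f2 _ h (btw_right _ _) : ¬ Mbt a m₂ s)
  have s3 := Va_symm hB hE hi (fun h => f0 (hs.tr1 h) : ¬ Mbt m₁ x s)
  have s4 := Va_symm hB hE hi (fun h => n1 h.symm : ¬ Mbt x m₁ m₂)
  have s5 := Va_symm hB hE hi (f7 _ (btw_left _ _) : ¬ Mbt x m₁ s)
  have s6 := Va_symm hB hE hi (f7' _ (btw_left _ _) : ¬ Mbt x m₂ s)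
  clear * - e1 e2 e3 e4 e5 e5' e6 e6' e7 e7' e8 s1 s2 s3 s4 s5 s6
  grind

include hB in
theorem pasch1 {p a b x v : S} (hv : Mbt p v b) (hx : Mbt a x b) :
    ∃ w, Mbt p w x ∧ Mbt a w v := by
  by_contra hD
  have D : ∀ w, Mbt p w x → ¬ Mbt a w v := fun w h h' => hD ⟨w, h, h'⟩
  have Dx : ¬ Mbt a x v := D x (btw_right _ _)
  have Dv : ¬ Mbt p v x := fun h => D v h (btw_right _ _)
  have g1 : ∀ w, Mbt b w x → ¬ Mbt p a w := fun w hw h =>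
    D a (h.symm.tr2 (hx.symm.tr2 hw)).symm (btw_left _ _)
  have g4 : ∀ w, Mbt b w v → ¬ Mbt a p w := fun w hw h =>
    D p (btw_left _ _) (h.symm.tr2 (hv.symm.tr2 hw)).symm
  have g2 : ∀ w, Mbt p w v → ¬ Mbt a x w := fun w hw h =>
    Dx (lemB hB hE hi h hx (hv.tr2 hw))
  have g3 : ∀ w, Mbt a w x → ¬ Mbt p v w := fun w hw h =>
    Dv (lemB hB hE hi h hv (hx.tr2 hw))
  have g6 : ∀ w, Mbt b w v → ¬ Mbt a w p := fun w hw h =>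
    Dv (lemB hB hE hi (h.symm.tr1 (hv.symm.tr2 hw).symm) hv hx)
  have g7 : ∀ w, Mbt b w x → ¬ Mbt a w p := fun w hw h =>
    Dx (lemB hB hE hi (h.tr1 (hx.symm.tr2 hw).symm) hx hv)
  have g8 : ∀ w, Mbt a w x → ¬ Mbt p w v := by
    intro w ha hp
    rcases Mbt.total hB (hx.tr2 ha) (hv.tr2 hp) with h | h
    · exact Dx (hx.ext' ((hv.tr2 hp).tr2 h))
    · exact Dv (hv.ext' ((hx.tr2 ha).tr2 h))
  have na : ¬ Mbt p a b := g1 _ (btw_left _ _)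
  have np : ¬ Mbt b p a := fun h => g4 _ (btw_left _ _) h.symm
  have nb : ¬ Mbt a b p := g6 _ (btw_left _ _)
  apply Va_tri hB hE hi na np nb
  have e1 := Va_cone hB hE hi g1
  have e4 := Va_cone hB hE hi g4
  have e2 := Va_cone hB hE hi g2
  have e3 := Va_cone hB hE hi g3
  have e5 := Va_sq hB hE hi D
  have e6 := Va_sq hB hE hi g6
  have e7 := Va_sq hB hE hi g7
  have e8 := Va_sq hB hE hi g8
  have s1 := Va_symm hB hE hi np
  have s2 := Va_symm hB hE hi (g6 _ (btw_right _ _))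
  have a1 := Va_add hB hE hi na hv
  have s3 := Va_symm hB hE hi (fun h => na (hv.symm.tr1 h.symm).symm : ¬ Mbt v a b)
  have a2 := Va_add hB hE hi (fun h => np h.symm) hx
  have s4 := Va_symm hB hE hi (fun h => np (hx.symm.tr1 h.symm) : ¬ Mbt x p b)
  clear * - e1 e2 e3 e4 e5 e6 e7 e8 s1 s2 s3 s4 a1 a2
  grind

include hB in
theorem pasch2 {p a b x u v : S} (hu : Mbt p u a) (hv : Mbt p v b) (hx : Mbt a x b) :
    ∃ w, Mbt p w x ∧ Mbt u w v := by
  obtain ⟨y, hy1, hy2⟩ := pasch1 hB hE hi hv hx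
  obtain ⟨w, hw1, hw2⟩ := pasch1 hB hE hi hu hy2.symm
  exact ⟨w, hy1.tr1 hw1, hw2.symm⟩

omit hE hi in
theorem isClosed_meet (p a b u v : S) :
    IsClosed {t : ℝ | t ∈ Icc (0 : ℝ) 1 ∧ ∃ y, Mbt p y (gp hB a b t) ∧ Mbt u y v} := by
  have hK : IsCompact {z : ℝ × ℝ × ℝ | z ∈ Icc (0 : ℝ) 1 ×ˢ (Icc (0 : ℝ) 1 ×ˢ Icc (0 : ℝ) 1) ∧
      gp hB p (gp hB a b z.1) z.2.1 = gp hB u v z.2.2} := by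
    apply (isCompact_Icc.prod (isCompact_Icc.prod isCompact_Icc)).inter_right
    apply isClosed_eq
    · exact continuous_gp' hB p (continuous_gp' hB a continuous_const (by fun_prop)) (by fun_prop)
    · exact continuous_gp' hB u continuous_const (by fun_prop)
  convert (hK.image continuous_fst).isClosed using 1
  ext t
  constructor
  · rintro ⟨ht, y, h1, h2⟩
    obtain ⟨r, hr, rfl⟩ := h1.exists_gp hB
    obtain ⟨s, hs, hy⟩ := h2.exists_gp hB
    exact ⟨(t, r, s), ⟨⟨ht, hr, hs⟩, hy⟩, rfl⟩
  · rintro ⟨⟨t', r, s⟩, ⟨⟨ht, hr, hs⟩, hy⟩, rfl⟩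
    exact ⟨ht, _, gp_btw hB _ _ r, by simp only at hy; rw [hy]; exact gp_btw hB _ _ s⟩

include hB in
theorem join_aux {p a b u v w : S} (hu : Mbt p u a) (hv : Mbt p v b) (hw : Mbt u w v) :
    ∃ x, Mbt a x b ∧ Mbt p w x := by
  have hpre := isPreconnected_closed_iff.1 (isPreconnected_Icc (a := (0 : ℝ)) (b := 1)) _ _
    (isClosed_meet hB p a b u w) (isClosed_meet hB p a b w v) ?_ ?_ ?_
  · obtain ⟨t, -, ⟨-, y1, h1, h1'⟩, ⟨-, y2, h2, h2'⟩⟩ := hpre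
    refine ⟨gp hB a b t, gp_btw hB a b t, ?_⟩
    have hm : Mbt y1 w y2 := (hw.tr2 h1').ext' h2'
    rcases Mbt.total hB h1 h2 with h | h
    · exact h2.tr1 (h.symm.tr1 hm.symm).symm
    · exact h1.tr1 (h.symm.tr1 hm).symm
  · intro t ht
    obtain ⟨y, hy, hy'⟩ := pasch2 hB hE hi hu hv (gp_btw hB a b t)
    rcases Mbt.total hB hw hy' with h | h
    · exact Or.inr ⟨ht, y, hy, hy'.tr2 h⟩
    · exact Or.inl ⟨ht, y, hy, h⟩
  · exact ⟨0, by simp, by simp, u, by rwa [gp_zero], btw_left _ _⟩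
  · exact ⟨1, by simp, by simp, v, by rwa [gp_one], btw_right _ _⟩

omit hE hi in
include hB in
theorem seg_eq {x y : S} {G : Set S} (h : IsGeodesicSegment x y G) (w : S) : w ∈ G ↔ Mbt x w y := by
  obtain ⟨γ, hγ, rfl⟩ := h
  have hd : 0 ≤ dist x y := dist_nonneg
  constructor
  · rintro ⟨t, ht, rfl⟩
    have h1 := hγ.1 0 ⟨le_rfl, hd⟩ t ht
    have h2 := hγ.1 t ht (dist x y) ⟨hd, le_rfl⟩
    rw [hγ.2.1, abs_sub_comm, abs_of_nonneg (by linarith [ht.1])] at h1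
    rw [hγ.2.2, abs_sub_comm, abs_of_nonneg (by linarith [ht.2])] at h2
    unfold Mbt; linarith
  · intro hw
    obtain ⟨t, ht, rfl⟩ := hw.exists_gp hB
    refine ⟨t * dist x y, ⟨mul_nonneg ht.1 hd, mul_le_of_le_one_left hd ht.2⟩, ?_⟩
    rw [geod_unique hB hγ (hB.1 x y).choose_spec ht, gp, clp_of_mem ht]

end BusemannAux

/-- Busemann surfaces are join-hull commutative. -/
theorem busemann_surface_join_hull_commutative {S : Type*} [MetricSpace S]
    (hS : IsBusemannSurface S)
    (seg : S → S → Set S) (hseg : ∀ x y : S, IsGeodesicSegment x y (seg x y))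
    (A : Set S) (hAne : A.Nonempty) (hAconv : SegConvex seg A)
    (p : S) (hp : p ∉ A) :
    segConvexHull seg ({p} ∪ A) = ⋃ x ∈ A, seg p x := by
  obtain ⟨hB, ⟨e⟩⟩ := hS
  obtain ⟨E, hE, hi⟩ : ∃ E : S → ℂ, Continuous E ∧ Function.Injective E :=
    ⟨fun s => Complex.equivRealProdCLM.symm (e s),
      Complex.equivRealProdCLM.symm.continuous.comp e.continuous,
      Complex.equivRealProdCLM.symm.injective.comp e.injective⟩
  have hm : ∀ x y w, w ∈ seg x y ↔ Mbt x w y := fun x y w => seg_eq hB (hseg x y) w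
  apply Subset.antisymm
  · apply sInter_subset_of_mem
    refine ⟨?_, ?_⟩
    · intro u hu v hv w hw
      simp only [mem_iUnion, hm, exists_prop] at hu hv hw ⊢
      obtain ⟨a, ha, hu⟩ := hu
      obtain ⟨b, hb, hv⟩ := hv
      obtain ⟨x, hx, hxw⟩ := join_aux hB hE hi hu hv hw
      exact ⟨x, hAconv a ha b hb ((hm _ _ _).2 hx), hxw⟩
    · rintro y (rfl | hy)
      · obtain ⟨a, ha⟩ := hAne
        simp only [mem_iUnion, hm, exists_prop]
        exact ⟨a, ha, btw_left _ _⟩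
      · simp only [mem_iUnion, hm, exists_prop]
        exact ⟨y, hy, btw_right _ _⟩
  · intro w hw R hR
    simp only [mem_iUnion, exists_prop] at hw
    obtain ⟨x, hx, hw⟩ := hw
    exact hR.1 p (hR.2 (Or.inl rfl)) x (hR.2 (Or.inr hx)) hw
end
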